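/- arXiv:2312.06214 — 3 statements merged into one kernel-verified Lean document; each statement's English description precedes it below -/
import Mathlib

section
/- Step (b) in the proof of Theorem 3.5: If A ∈ End_K(V̄^⊗m) commutes with Ξ(h) for every h ∈ 𝓗_m, then for each 0 ≤ l ≤ m there exists an operator B ∈ Φ(L_q^ı) such that A and B agree on the subspace V̄_l; i.e., A|_{V̄_l} = B|_{V̄_l}. -/
/-!
Any operator `A` commuting with the image of the duplex Hecke algebra in fact lies in `Φ(L_q^ı)`
(`centralizer_le_PhiL`), so that `B = A` works for every `l`. Only the operators `Ψ(H_i)` and the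
coordinate projections `Ξ(x_e^(l))` onto `V^⊗l ⊗ η_{r+3/2}^⊗(m-l)` are used; let `C` be the
centralizer of these.

The generators of `Φ(L_q^ı)` lie in `C`: they commute with the `Ψ(H_i)` (`levi_commute_RopN`), a
computation in one or two tensor factors, and with the projections (`levi_commute_proj`), since
no generator moves a vector between `V` and `η_{±(r+3/2)}`. Thus `Φ(L_q^ı) ≤ C`, and it remains
to compare dimensions over `ℚ(q)`. This can be done at `q = 1`: by `le_of_red`, it suffices that
each specialization of a member of `C` is also a specialization of a member of `Φ(L_q^ı)`.

At `q = 1` the `Ψ(H_i)` become the simple reflections of the Weyl group `W` of type `B_m`, acting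
on indices by signed permutations. The specialization `z` of a member of `C` is therefore a
`W`-invariant matrix. The projections moreover force `z u v` to vanish unless, in every tensor
position `k`, either `u k = v k` or both indices lie in `𝕀(2r+2)` (`support_of_inv`). Averaging
over `W` writes `z` as a combination of symmetrized tensors `∑ σ, ⊗ k, X (σ k)` whose factors are
matrices `E_{ab} + E_{-a,-b}` with `a = b` or `a, b ∈ 𝕀(2r+2)` (`sum_smul_symT`).

On the other side, the specializations of `ℬ_i` and of `(𝕜_{r+1} - 1) / (q - 1)` are, up to
the identity, diagonal actions of combinations of such matrices. As commutators of specializations are again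
specializations, the diagonal action of every matrix `E_{ab} + E_{-a,-b}` as above is a
specialization of an operator in `Φ(L_q^ı)` (`Blk.mem`). The diagonal actions generate all
symmetrized tensors under products and linear combinations (`symT_mem`), which gives the
required specializations.
-/

noncomputable section

open scoped BigOperators

set_option maxHeartbeats 1000000
set_option synthInstance.maxHeartbeats 400000

/-- The field `ℚ(q)`. -/
abbrev Kq : Type := RatFunc ℚ

/-- The element `q`, transcendental over `ℚ`. -/
def qv : Kq := RatFunc.X

/-- Index set `𝕀(2r+4)`: the `j`-th element represents the half-integer `j - r - 3/2`. -/
abbrev Idx (r : ℕ) := Fin (2*r+4)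

/-- The space `V̄`, with basis `η_j` indexed by `𝕀(2r+4)` (coordinate form). -/
abbrev Vb (r : ℕ) := Idx r → Kq

/-- The tensor power `V̄^⊗m` (coordinates with respect to the basis `M_f`). -/
abbrev TP (r m : ℕ) := (Fin m → Idx r) → Kq

/-- Basis vector `M_f = η_{f 0} ⊗ ⋯ ⊗ η_{f (m-1)}`. -/
def Mf {r m : ℕ} (f : Fin m → Idx r) : TP r m := Pi.single f 1

/-- For a quantum-group index `a : Fin (2r+3)` (representing `i = a - r - 1 ∈ [-r-1, r+1]`),
the index of `η_{i - 1/2}`. -/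
def loI {r : ℕ} (a : Fin (2*r+3)) : Idx r := ⟨a.1, by have := a.2; omega⟩

/-- The index of `η_{i + 1/2}`. -/
def hiI {r : ℕ} (a : Fin (2*r+3)) : Idx r := ⟨a.1+1, by have := a.2; omega⟩

/-- The index of `η_{-r-3/2}`. -/
def botI (r : ℕ) : Idx r := ⟨0, by omega⟩

/-- The index of `η_{r+3/2}`. -/
def topI (r : ℕ) : Idx r := ⟨2*r+3, by omega⟩

/-- A linear endomorphism of `V̄` of the shape `v ↦ (j ↦ c j * v (t j))`. -/
def diagMove (r : ℕ) (c : Idx r → Kq) (t : Idx r → Idx r) : Module.End Kq (Vb r) where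
  toFun v := fun j => c j * v (t j)
  map_add' u v := by funext j; simp [Pi.add_apply, mul_add]
  map_smul' s v := by
    funext j
    simp only [Pi.smul_apply, smul_eq_mul, RingHom.id_apply]
    ring

/-- The operator `e_i` on `V̄`: `e_i η_{i+1/2} = η_{i-1/2}`, zero on other basis vectors. -/
def opE (r : ℕ) (a : Fin (2*r+3)) : Module.End Kq (Vb r) :=
  diagMove r (fun j => if j = loI a then 1 else 0) (fun j => if j = loI a then hiI a else j)

/-- The operator `f_i` on `V̄`: `f_i η_{i-1/2} = η_{i+1/2}`, zero on other basis vectors. -/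
def opF (r : ℕ) (a : Fin (2*r+3)) : Module.End Kq (Vb r) :=
  diagMove r (fun j => if j = hiI a then 1 else 0) (fun j => if j = hiI a then loI a else j)

/-- The operator `κ_i` on `V̄`. -/
def opK (r : ℕ) (a : Fin (2*r+3)) : Module.End Kq (Vb r) :=
  diagMove r (fun j => if j = loI a then qv else if j = hiI a then qv⁻¹ else 1) id

/-- The operator `κ_i⁻¹` on `V̄`. -/
def opKinv (r : ℕ) (a : Fin (2*r+3)) : Module.End Kq (Vb r) :=
  diagMove r (fun j => if j = loI a then qv⁻¹ else if j = hiI a then qv else 1) id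

/-- A linear endomorphism of `V̄^⊗m` given by a "matrix" `c`. -/
def matOp (r m : ℕ) (c : (Fin m → Idx r) → (Fin m → Idx r) → Kq) : Module.End Kq (TP r m) where
  toFun v := fun g => ∑ f : Fin m → Idx r, c g f * v f
  map_add' u v := by
    funext g
    simp [Pi.add_apply, mul_add, Finset.sum_add_distrib]
  map_smul' s v := by
    funext g
    simp only [Pi.smul_apply, smul_eq_mul, RingHom.id_apply, Finset.mul_sum]
    exact Finset.sum_congr rfl (fun f _ => by ring)

/-- The tensor product `A 0 ⊗ A 1 ⊗ ⋯ ⊗ A (m-1)` of endomorphisms of `V̄`,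
as an endomorphism of `V̄^⊗m`. -/
def tensorOp (r m : ℕ) (A : Fin m → Module.End Kq (Vb r)) : Module.End Kq (TP r m) :=
  matOp r m (fun g f => ∏ k : Fin m, (A k) (Pi.single (f k) 1) (g k))
/-- `𝔼_i = Σ_j id^{⊗(j-1)} ⊗ e_i ⊗ (κ_i⁻¹)^{⊗(m-j)}` on `V̄^⊗m`. -/
def opEE (r m : ℕ) (a : Fin (2*r+3)) : Module.End Kq (TP r m) :=
  ∑ j : Fin m, tensorOp r m (fun k =>
    if (k : ℕ) < (j : ℕ) then 1 else if k = j then opE r a else opKinv r a)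

/-- `𝔽_i = Σ_j κ_i^{⊗(j-1)} ⊗ f_i ⊗ id^{⊗(m-j)}` on `V̄^⊗m`. -/
def opFF (r m : ℕ) (a : Fin (2*r+3)) : Module.End Kq (TP r m) :=
  ∑ j : Fin m, tensorOp r m (fun k =>
    if (k : ℕ) < (j : ℕ) then opK r a else if k = j then opF r a else 1)

/-- `𝕂_i = κ_i^{⊗m}`. -/
def opKK (r m : ℕ) (a : Fin (2*r+3)) : Module.End Kq (TP r m) :=
  tensorOp r m (fun _ => opK r a)

/-- `𝕂_i⁻¹ = (κ_i⁻¹)^{⊗m}`. -/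
def opKKinv (r m : ℕ) (a : Fin (2*r+3)) : Module.End Kq (TP r m) :=
  tensorOp r m (fun _ => opKinv r a)

/-- `𝕜_i = 𝕂_i 𝕂_{-i}⁻¹` (the index `-i` corresponds to `Fin.rev a`). -/
def opkk (r m : ℕ) (a : Fin (2*r+3)) : Module.End Kq (TP r m) :=
  opKK r m a * opKKinv r m a.rev

/-- `𝕜_i⁻¹ = 𝕂_{-i} 𝕂_i⁻¹`. -/
def opkkInv (r m : ℕ) (a : Fin (2*r+3)) : Module.End Kq (TP r m) :=
  opKK r m a.rev * opKKinv r m a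

/-- The index `a` corresponding to `i = 0`. -/
def midI (r : ℕ) : Fin (2*r+3) := ⟨r+1, by omega⟩

/-- `ℬ_i = 𝔼_i + 𝔽_{-i} 𝕂_i⁻¹` for `i ≠ 0`. -/
def opB (r m : ℕ) (a : Fin (2*r+3)) : Module.End Kq (TP r m) :=
  opEE r m a + opFF r m a.rev * opKKinv r m a

/-- `ℬ_0 = 𝔼_0 + q 𝔽_0 𝕂_0⁻¹ + 𝕂_0⁻¹`. -/
def opB0 (r m : ℕ) : Module.End Kq (TP r m) :=
  opEE r m (midI r) + qv • (opFF r m (midI r) * opKKinv r m (midI r)) + opKKinv r m (midI r)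

/-- Generating set of the Levi-type ıquantum group image `Φ(L_q^ı)`:
`ℬ_0`, the `ℬ_i` with `0 ≠ i`, `-r ≤ i ≤ r`, and the `𝕜_i^{±1}` with `-r-1 ≤ i ≤ r+1`. -/
def LeviSet (r m : ℕ) : Set (Module.End Kq (TP r m)) :=
  {opB0 r m} ∪ (opB r m '' {a | a ≠ midI r ∧ 0 < (a : ℕ) ∧ (a : ℕ) < 2*r+2}) ∪
    Set.range (opkk r m) ∪ Set.range (opkkInv r m)

/-- `Φ(L_q^ı)`, the image of the Levi-type ıquantum group in `End(V̄^⊗m)`. -/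
def PhiL (r m : ℕ) : Subalgebra Kq (Module.End Kq (TP r m)) :=
  Algebra.adjoin Kq (LeviSet r m)

/-- The operator `Ψ(H_0)` on `V̄^⊗m`. -/
def R0op (r m : ℕ) : Module.End Kq (TP r m) :=
  if h : 0 < m then
    { toFun := fun v g =>
        v (Function.update g ⟨0, h⟩ (Fin.rev (g ⟨0, h⟩))) +
          (if g ⟨0, h⟩ < Fin.rev (g ⟨0, h⟩) then (qv⁻¹ - qv) * v g else 0)
      map_add' := fun u v => by
        funext g
        simp only [Pi.add_apply]
        split_ifs <;> ring
      map_smul' := fun s v => by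
        funext g
        simp only [Pi.smul_apply, smul_eq_mul, RingHom.id_apply]
        split_ifs <;> ring }
  else 1

/-- The operator `Ψ(H_{p+1})` on `V̄^⊗m`, interchanging tensor positions `p` and `p+1`
(0-based). -/
def Rsw (r m : ℕ) (p : ℕ) : Module.End Kq (TP r m) :=
  if h : p + 1 < m then
    { toFun := fun v g =>
        if g ⟨p, by omega⟩ = g ⟨p+1, h⟩ then qv⁻¹ * v g
        else v (g ∘ Equiv.swap ⟨p, by omega⟩ ⟨p+1, h⟩) +
          (if g ⟨p+1, h⟩ < g ⟨p, by omega⟩ then (qv⁻¹ - qv) * v g else 0)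
      map_add' := fun u v => by
        funext g
        simp only [Pi.add_apply, Function.comp_apply]
        split_ifs <;> ring
      map_smul' := fun s v => by
        funext g
        simp only [Pi.smul_apply, smul_eq_mul, RingHom.id_apply, Function.comp_apply]
        split_ifs <;> ring }
  else 1

/-- The operator `Ψ(H_i)` on `V̄^⊗m`, for `0 ≤ i ≤ m-1`. -/
def RopN (r m : ℕ) (i : ℕ) : Module.End Kq (TP r m) :=
  if i = 0 then R0op r m else Rsw r m (i - 1)
/-- `j ∈ 𝕀(2r+2)`, i.e. `η_j ∈ V`. -/
def innerI (r : ℕ) (j : Idx r) : Prop := j ≠ botI r ∧ j ≠ topI r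

/-- `f` indexes a basis vector of `V^{⊗l} ⊗ η_{r+3/2}^{⊗(m-l)}`. -/
def goodF (r m : ℕ) (l : ℕ) (f : Fin m → Idx r) : Prop :=
  ∀ k : Fin m, ((k : ℕ) < l → innerI r (f k)) ∧ (l ≤ (k : ℕ) → f k = topI r)

/-- The subspace `V̄_{{1,…,l},∅} = V^{⊗l} ⊗ η_{r+3/2}^{⊗(m-l)}` of `V̄^⊗m`. -/
def Vsub (r m : ℕ) (l : ℕ) : Submodule Kq (TP r m) :=
  Submodule.span Kq {v | ∃ f, goodF r m l f ∧ v = Mf f}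

/-- The subspace `V̄_{I,J}` of `V̄^⊗m`. -/
def VIJ (r m : ℕ) (I J : Finset (Fin m)) : Submodule Kq (TP r m) :=
  Submodule.span Kq {v | ∃ f : Fin m → Idx r,
    (∀ k : Fin m, (k ∈ I → innerI r (f k)) ∧ (k ∈ J → f k = botI r) ∧
      (k ∉ I → k ∉ J → f k = topI r)) ∧ v = Mf f}

/-- The subspace `V̄_l = ⊕_{#I = l, J} V̄_{I,J}` of `V̄^⊗m`. -/
def Vlevel (r m : ℕ) (l : ℕ) : Submodule Kq (TP r m) :=
  Submodule.span Kq {v | ∃ f : Fin m → Idx r,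
    Nat.card {k : Fin m // innerI r (f k)} = l ∧ v = Mf f}

/-- The length (number of inversions) of a permutation of `{0, …, l-1}`. -/
def lenPerm {l : ℕ} (σ : Equiv.Perm (Fin l)) : ℕ :=
  (Finset.univ.filter (fun p : Fin l × Fin l => p.1 < p.2 ∧ σ p.2 < σ p.1)).card

/-- The simple transposition interchanging `p` and `p+1` (0-based) in `𝔖_l`;
this is the paper's `s_{p+1}`. -/
def adjSwap (l : ℕ) (p : ℕ) : Equiv.Perm (Fin l) :=
  if h : p + 1 < l then Equiv.swap ⟨p, by omega⟩ ⟨p+1, h⟩ else 1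

/-- The first descent of a permutation, if any. -/
def descentIdx {l : ℕ} (σ : Equiv.Perm (Fin l)) : Option ℕ :=
  (List.range l).find? (fun p =>
    if h : p + 1 < l then decide (σ ⟨p+1, h⟩ < σ ⟨p, by omega⟩) else false)

/-- Canonical reduced word construction (with fuel). -/
def permWordAux {l : ℕ} : ℕ → Equiv.Perm (Fin l) → List ℕ
  | 0, _ => []
  | (fuel+1), σ =>
    match descentIdx σ with
    | none => []
    | some p => permWordAux fuel (σ * adjSwap l p) ++ [p]

/-- A canonical reduced word for `σ`: `σ = s_{p₁+1} ⋯ s_{p_k+1}` (paper indexing)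
where `permWord σ = [p₁, …, p_k]`, and `k = ℓ(σ)`. -/
def permWord {l : ℕ} (σ : Equiv.Perm (Fin l)) : List ℕ := permWordAux (lenPerm σ) σ

/-- The operator `Ψ(H_σ)` on `V̄^⊗m` for a permutation `σ ∈ 𝔖_l` (`l ≤ m`), where
`H_σ = H_{i₁} ⋯ H_{i_k}` for a reduced expression `σ = s_{i₁} ⋯ s_{i_k}`; since `Ψ` is an
anti-homomorphism this is the product of the `Ψ(H_i)` in reversed order. -/
def opPerm (r m : ℕ) {l : ℕ} (σ : Equiv.Perm (Fin l)) : Module.End Kq (TP r m) :=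
  (((permWord σ).map (fun p => RopN r m (p+1))).reverse).prod

/-- `A` is a finite product of the operators `Ψ(H_i)^{±1}`, `0 ≤ i ≤ m-1`. -/
def IsRWord (r m : ℕ) (A : Module.End Kq (TP r m)) : Prop :=
  ∃ ws : List (Module.End Kq (TP r m)), A = ws.prod ∧
    ∀ u ∈ ws, ∃ i : ℕ, i < m ∧
      (u = RopN r m i ∨ (u * RopN r m i = 1 ∧ RopN r m i * u = 1))
/-- Generator `H_i` of the free algebra on `m` letters. -/
def Hvar (m : ℕ) (i : Fin m) : FreeAlgebra Kq (Fin m) := FreeAlgebra.ι Kq i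

/-- The defining relations of the Iwahori–Hecke algebra `H(B_m)` of type `B_m`. -/
inductive HBrel (m : ℕ) : FreeAlgebra Kq (Fin m) → FreeAlgebra Kq (Fin m) → Prop
  | quad (i : Fin m) :
      HBrel m ((Hvar m i - algebraMap Kq _ qv⁻¹) * (Hvar m i + algebraMap Kq _ qv)) 0
  | braid (i : ℕ) (h1 : 1 ≤ i) (h2 : i + 1 < m) :
      HBrel m (Hvar m ⟨i, by omega⟩ * Hvar m ⟨i+1, h2⟩ * Hvar m ⟨i, by omega⟩)
              (Hvar m ⟨i+1, h2⟩ * Hvar m ⟨i, by omega⟩ * Hvar m ⟨i+1, h2⟩)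
  | comm (i j : Fin m) (h : (i : ℕ) + 1 < (j : ℕ) ∨ (j : ℕ) + 1 < (i : ℕ)) :
      HBrel m (Hvar m i * Hvar m j) (Hvar m j * Hvar m i)
  | braid0 (h : 1 < m) :
      HBrel m (Hvar m ⟨0, by omega⟩ * Hvar m ⟨1, h⟩ * Hvar m ⟨0, by omega⟩ * Hvar m ⟨1, h⟩)
              (Hvar m ⟨1, h⟩ * Hvar m ⟨0, by omega⟩ * Hvar m ⟨1, h⟩ * Hvar m ⟨0, by omega⟩)

/-- The Iwahori–Hecke algebra `H(B_m)` of type `B_m` over `ℚ(q)`. -/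
abbrev HeckeB (m : ℕ) := RingQuot (HBrel m)

/-- The generator `H_i ∈ H(B_m)`. -/
def Hgen (m : ℕ) (i : Fin m) : HeckeB m := RingQuot.mkAlgHom Kq (HBrel m) (Hvar m i)

/-- The generator `H_j ∈ H(B_m)` with out-of-range indices sent to `1`. -/
def HgenN (m : ℕ) (j : ℕ) : HeckeB m := if h : j < m then Hgen m ⟨j, h⟩ else 1

/-- The element `H_w ∈ H(B_m)` for `w ∈ 𝔖_m ⊂ 𝒲(B_m)`, defined via a reduced expression
for `w` (well defined by Matsumoto's theorem). -/
def HpermB (m : ℕ) (w : Equiv.Perm (Fin m)) : HeckeB m :=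
  ((permWord w).map (fun p => HgenN m (p+1))).prod

/-- Generators of the duplex Hecke algebra: the `T_i` and the `x_σ^{(l)}`. -/
def DGen (m : ℕ) : Type := (Fin m) ⊕ (Σ l : Fin (m+1), Equiv.Perm (Fin (l : ℕ)))

/-- The generator `T_i` of the free algebra. -/
def Tvar (m : ℕ) (i : Fin m) : FreeAlgebra Kq (DGen m) := FreeAlgebra.ι Kq (Sum.inl i)

/-- The generator `x_σ^{(l)}` of the free algebra. -/
def Xvar (m : ℕ) (l : Fin (m+1)) (σ : Equiv.Perm (Fin (l : ℕ))) : FreeAlgebra Kq (DGen m) :=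
  FreeAlgebra.ι Kq (Sum.inr ⟨l, σ⟩)

/-- The defining relations of the duplex Hecke algebra `𝓗_m` of type `B`. -/
inductive DHrel (m : ℕ) : FreeAlgebra Kq (DGen m) → FreeAlgebra Kq (DGen m) → Prop
  | quadT (i : Fin m) :
      DHrel m ((Tvar m i + algebraMap Kq _ qv) * (Tvar m i - algebraMap Kq _ qv⁻¹)) 0
  | braidT (i : ℕ) (h1 : 1 ≤ i) (h2 : i + 1 < m) :
      DHrel m (Tvar m ⟨i, by omega⟩ * Tvar m ⟨i+1, h2⟩ * Tvar m ⟨i, by omega⟩)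
              (Tvar m ⟨i+1, h2⟩ * Tvar m ⟨i, by omega⟩ * Tvar m ⟨i+1, h2⟩)
  | commT (i j : Fin m) (h : (i : ℕ) + 1 < (j : ℕ) ∨ (j : ℕ) + 1 < (i : ℕ)) :
      DHrel m (Tvar m i * Tvar m j) (Tvar m j * Tvar m i)
  | braid0T (h : 1 < m) :
      DHrel m (Tvar m ⟨0, by omega⟩ * Tvar m ⟨1, h⟩ * Tvar m ⟨0, by omega⟩ * Tvar m ⟨1, h⟩)
              (Tvar m ⟨1, h⟩ * Tvar m ⟨0, by omega⟩ * Tvar m ⟨1, h⟩ * Tvar m ⟨0, by omega⟩)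
  | xRightUp (l : Fin (m+1)) (σ : Equiv.Perm (Fin (l : ℕ))) (p : ℕ) (hp : p + 1 < (l : ℕ))
      (hlen : lenPerm (σ * adjSwap (l : ℕ) p) = lenPerm σ + 1) :
      DHrel m (Xvar m l σ * Xvar m l (adjSwap (l : ℕ) p)) (Xvar m l (σ * adjSwap (l : ℕ) p))
  | xRightDown (l : Fin (m+1)) (σ : Equiv.Perm (Fin (l : ℕ))) (p : ℕ) (hp : p + 1 < (l : ℕ))
      (hlen : lenPerm (σ * adjSwap (l : ℕ) p) + 1 = lenPerm σ) :
      DHrel m (Xvar m l σ * Xvar m l (adjSwap (l : ℕ) p))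
              (Xvar m l (σ * adjSwap (l : ℕ) p) + algebraMap Kq _ (qv⁻¹ - qv) * Xvar m l σ)
  | xLeftUp (l : Fin (m+1)) (σ : Equiv.Perm (Fin (l : ℕ))) (p : ℕ) (hp : p + 1 < (l : ℕ))
      (hlen : lenPerm (adjSwap (l : ℕ) p * σ) = lenPerm σ + 1) :
      DHrel m (Xvar m l (adjSwap (l : ℕ) p) * Xvar m l σ) (Xvar m l (adjSwap (l : ℕ) p * σ))
  | xLeftDown (l : Fin (m+1)) (σ : Equiv.Perm (Fin (l : ℕ))) (p : ℕ) (hp : p + 1 < (l : ℕ))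
      (hlen : lenPerm (adjSwap (l : ℕ) p * σ) + 1 = lenPerm σ) :
      DHrel m (Xvar m l (adjSwap (l : ℕ) p) * Xvar m l σ)
              (Xvar m l (adjSwap (l : ℕ) p * σ) + algebraMap Kq _ (qv⁻¹ - qv) * Xvar m l σ)
  | xOrtho (l k : Fin (m+1)) (h : l ≠ k) (σ : Equiv.Perm (Fin (l : ℕ)))
      (γ : Equiv.Perm (Fin (k : ℕ))) :
      DHrel m (Xvar m l σ * Xvar m k γ) 0
  | TxMid (i : ℕ) (l : Fin (m+1)) (h0 : 0 < i) (hil : i < (l : ℕ))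
      (σ : Equiv.Perm (Fin (l : ℕ))) :
      DHrel m (Tvar m ⟨i, by have := l.2; omega⟩ * Xvar m l σ)
              (Xvar m l (adjSwap (l : ℕ) (i-1)) * Xvar m l σ)
  | xTMid (i : ℕ) (l : Fin (m+1)) (h0 : 0 < i) (hil : i < (l : ℕ))
      (σ : Equiv.Perm (Fin (l : ℕ))) :
      DHrel m (Xvar m l σ * Tvar m ⟨i, by have := l.2; omega⟩)
              (Xvar m l σ * Xvar m l (adjSwap (l : ℕ) (i-1)))
  | TxBig (i : Fin m) (l : Fin (m+1)) (h : (l : ℕ) < (i : ℕ)) (σ : Equiv.Perm (Fin (l : ℕ))) :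
      DHrel m (Tvar m i * Xvar m l σ) (algebraMap Kq _ qv⁻¹ * Xvar m l σ)
  | xTBig (i : Fin m) (l : Fin (m+1)) (h : (l : ℕ) < (i : ℕ)) (σ : Equiv.Perm (Fin (l : ℕ))) :
      DHrel m (Xvar m l σ * Tvar m i) (algebraMap Kq _ qv⁻¹ * Xvar m l σ)

/-- The duplex Hecke algebra `𝓗_m` of type `B` over `ℚ(q)`. -/
abbrev DuplexH (m : ℕ) := RingQuot (DHrel m)

/-- The generator `T_i ∈ 𝓗_m`. -/
def Tg (m : ℕ) (i : Fin m) : DuplexH m := RingQuot.mkAlgHom Kq (DHrel m) (Tvar m i)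

/-- The generator `x_σ^{(l)} ∈ 𝓗_m`. -/
def Xg (m : ℕ) (l : Fin (m+1)) (σ : Equiv.Perm (Fin (l : ℕ))) : DuplexH m :=
  RingQuot.mkAlgHom Kq (DHrel m) (Xvar m l σ)

namespace LeviDuality

/-! ### Values of rational functions at `q = 1` -/

open Polynomial in
/-- `Red x y`: the rational function `x` is regular at `q = 1` and takes the value `y` there. -/
def Red (x : Kq) (y : ℚ) : Prop :=
  ∃ p d : ℚ[X], d.eval 1 = 1 ∧ x * algebraMap ℚ[X] Kq d = algebraMap ℚ[X] Kq p ∧ p.eval 1 = y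

namespace Red

open Polynomial

lemma poly (p : ℚ[X]) : Red (algebraMap ℚ[X] Kq p) (p.eval 1) :=
  ⟨p, 1, by simp, by simp, rfl⟩

lemma const (c : ℚ) : Red (algebraMap ℚ Kq c) c := by
  have := poly (C c)
  rwa [eval_C, ← Polynomial.algebraMap_eq, ← IsScalarTower.algebraMap_apply] at this

lemma zero : Red 0 0 := by simpa using poly 0

lemma one : Red 1 1 := by simpa using poly 1

lemma q : Red qv 1 := by
  have := poly X
  rwa [eval_X, RatFunc.algebraMap_X] at this

lemma qinv : Red qv⁻¹ 1 :=
  ⟨1, X, by simp, by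
    rw [RatFunc.algebraMap_X, qv, inv_mul_cancel₀ RatFunc.X_ne_zero, map_one], by simp⟩

lemma add {x x' : Kq} {y y' : ℚ} (h : Red x y) (h' : Red x' y') : Red (x + x') (y + y') := by
  obtain ⟨p, d, hd, hx, hy⟩ := h
  obtain ⟨p', d', hd', hx', hy'⟩ := h'
  refine ⟨p * d' + p' * d, d * d', by simp [hd, hd'], ?_, by simp [hd, hd', hy, hy']⟩
  simp only [map_add, map_mul, ← hx, ← hx']
  ring

lemma mul {x x' : Kq} {y y' : ℚ} (h : Red x y) (h' : Red x' y') : Red (x * x') (y * y') := by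
  obtain ⟨p, d, hd, hx, hy⟩ := h
  obtain ⟨p', d', hd', hx', hy'⟩ := h'
  refine ⟨p * p', d * d', by simp [hd, hd'], ?_, by simp [hy, hy']⟩
  simp only [map_mul, ← hx, ← hx']
  ring

lemma neg {x : Kq} {y : ℚ} (h : Red x y) : Red (-x) (-y) := by
  obtain ⟨p, d, hd, hx, hy⟩ := h
  exact ⟨-p, d, hd, by simp [← hx], by simp [hy]⟩

lemma sub {x x' : Kq} {y y' : ℚ} (h : Red x y) (h' : Red x' y') : Red (x - x') (y - y') := by
  simpa [sub_eq_add_neg] using h.add h'.neg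

lemma ite {x x' : Kq} {y y' : ℚ} (P : Prop) [Decidable P] (h : Red x y) (h' : Red x' y') :
    Red (if P then x else x') (if P then y else y') := by
  split_ifs <;> assumption

lemma sum {α : Type*} (s : Finset α) {x : α → Kq} {y : α → ℚ} (h : ∀ i ∈ s, Red (x i) (y i)) :
    Red (∑ i ∈ s, x i) (∑ i ∈ s, y i) := by
  classical
  induction s using Finset.induction_on with
  | empty => simpa using zero
  | insert a s ha ih =>
    rw [Finset.sum_insert ha, Finset.sum_insert ha]
    exact (h a (by simp)).add (ih fun i hi => h i (by simp [hi]))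

lemma prod {α : Type*} (s : Finset α) {x : α → Kq} {y : α → ℚ} (h : ∀ i ∈ s, Red (x i) (y i)) :
    Red (∏ i ∈ s, x i) (∏ i ∈ s, y i) := by
  classical
  induction s using Finset.induction_on with
  | empty => simpa using one
  | insert a s ha ih =>
    rw [Finset.prod_insert ha, Finset.prod_insert ha]
    exact (h a (by simp)).mul (ih fun i hi => h i (by simp [hi]))

lemma unique {x : Kq} {y y' : ℚ} (h : Red x y) (h' : Red x y') : y = y' := by
  obtain ⟨p, d, hd, hx, hy⟩ := h
  obtain ⟨p', d', hd', hx', hy'⟩ := h'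
  have : p * d' = p' * d := by
    apply RatFunc.algebraMap_injective ℚ
    simp only [map_mul, ← hx, ← hx']
    ring
  have := congrArg (Polynomial.eval 1) this
  simpa [hd, hd', hy, hy'] using this

/-- The derivative at `q = 1` of a product of functions with value `1` there, in the form of
the difference quotient `(x - 1) / (q - 1)`. -/
lemma quot_prod {α : Type*} (s : Finset α) {x : α → Kq} {y : α → ℚ}
    (hx : ∀ i ∈ s, Red (x i) 1) (h : ∀ i ∈ s, Red ((x i - 1) * (qv - 1)⁻¹) (y i)) :
    Red ((∏ i ∈ s, x i - 1) * (qv - 1)⁻¹) (∑ i ∈ s, y i) := by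
  classical
  induction s using Finset.induction_on with
  | empty => simpa using zero
  | insert a s ha ih =>
    rw [Finset.prod_insert ha, Finset.sum_insert ha]
    have h1 := ih (fun i hi => hx i (by simp [hi])) (fun i hi => h i (by simp [hi]))
    have h2 := ((h a (by simp)).mul (Red.prod s fun i hi => hx i (by simp [hi]))).add h1
    simp only [Finset.prod_const_one, mul_one] at h2
    convert h2 using 1
    ring

end Red

lemma qv_ne_zero : qv ≠ 0 := RatFunc.X_ne_zero

lemma qv_sub_one_ne_zero : qv - 1 ≠ 0 := by
  intro h
  have h3 : (Polynomial.X - 1 : Polynomial ℚ) = 0 := by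
    apply RatFunc.algebraMap_injective ℚ
    simpa [RatFunc.algebraMap_X, qv] using h
  have := congrArg (Polynomial.eval 2) h3
  norm_num at this

/-! ### Lifting equality of subspaces from `q = 1` -/

open Polynomial in
/-- A nonzero vector over `ℚ(q)` has a multiple with polynomial coordinates which do not all
vanish at `q = 1`. -/
lemma exists_scale {ι : Type*} [Fintype ι] (x : ι → Kq) (hx : x ≠ 0) :
    ∃ (s : Kq) (p : ι → ℚ[X]), (∀ i, s * x i = algebraMap ℚ[X] Kq (p i)) ∧
      ∃ i, (p i).eval 1 ≠ 0 := by
  classical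
  obtain ⟨⟨b, hb⟩, hb'⟩ := IsLocalization.exist_integer_multiples_of_finite
    (nonZeroDivisors ℚ[X]) (S := Kq) x
  choose p hp using hb'
  have hb0 : algebraMap ℚ[X] Kq b ≠ 0 := by
    simpa using nonZeroDivisors.ne_zero hb
  obtain ⟨i0, hi0⟩ : ∃ i, x i ≠ 0 := by
    by_contra! h
    exact hx (funext h)
  have hp' : ∀ i, algebraMap ℚ[X] Kq b * x i = algebraMap ℚ[X] Kq (p i) := fun i => by
    rw [hp i, ← Algebra.smul_def]
  have hpi0 : p i0 ≠ 0 := by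
    intro h
    have := hp' i0
    rw [h, map_zero] at this
    exact (mul_ne_zero hb0 hi0) this
  let _ : NormalizedGCDMonoid ℚ[X] := UniqueFactorizationMonoid.toNormalizedGCDMonoid ℚ[X]
  obtain ⟨g, hg, hg1⟩ := Finset.extract_gcd p (s := Finset.univ) ⟨i0, by simp⟩
  set e := Finset.univ.gcd p
  have he : e ≠ 0 := by
    intro h
    apply hpi0
    rw [hg i0 (by simp), h, zero_mul]
  have he' : algebraMap ℚ[X] Kq e ≠ 0 := by simpa using he
  refine ⟨(algebraMap ℚ[X] Kq e)⁻¹ * algebraMap ℚ[X] Kq b, g, fun i => ?_, ?_⟩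
  · rw [mul_assoc, hp', hg i (by simp), map_mul, inv_mul_cancel_left₀ he']
  · by_contra! h
    have : (X - C 1 : ℚ[X]) ∣ Finset.univ.gcd g :=
      Finset.dvd_gcd fun i _ => dvd_iff_isRoot.mpr (h i)
    rw [hg1] at this
    exact not_isUnit_X_sub_C _ (isUnit_of_dvd_one this)

open Polynomial in
/-- If `C' ≤ C` are subspaces of `ℚ(q)^ι` and every specialization at `q = 1` of a polynomial
vector in `C` is also the specialization of a vector in `C'`, then `C = C'`: the dimension of
`C` is at most, and that of `C'` at least, the dimension of the space of specializations. -/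
theorem le_of_red {ι : Type*} [Fintype ι] (C' C : Submodule Kq (ι → Kq)) (hle : C' ≤ C)
    (hp : ∀ p : ι → ℚ[X], (fun i => algebraMap ℚ[X] Kq (p i)) ∈ C →
      ∃ x ∈ C', ∀ i, Red (x i) ((p i).eval 1)) : C ≤ C' := by
  classical
  let S : Submodule ℚ (ι → ℚ) :=
    { carrier := {y | ∃ x ∈ C', ∀ i, Red (x i) (y i)}
      add_mem' := by
        rintro y y' ⟨x, hx, h⟩ ⟨x', hx', h'⟩
        exact ⟨x + x', C'.add_mem hx hx', fun i => (h i).add (h' i)⟩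
      zero_mem' := ⟨0, C'.zero_mem, fun i => Red.zero⟩
      smul_mem' := by
        rintro c y ⟨x, hx, h⟩
        exact ⟨algebraMap ℚ Kq c • x, C'.smul_mem _ hx, fun i => (Red.const c).mul (h i)⟩ }
  let b := Module.finBasis ℚ S
  set d := Module.finrank ℚ S
  obtain ⟨L, hL⟩ := LinearMap.exists_extend (b.equivFun : S →ₗ[ℚ] (Fin d → ℚ))
  have hL' : ∀ y : S, L y = b.equivFun y := fun y => by
    simpa using LinearMap.congr_fun hL y
  have hLsum : ∀ y j, L y j = ∑ i, L (Pi.single i 1) j * y i := by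
    intro y j
    conv_lhs => rw [pi_eq_sum_univ' y]
    rw [map_sum, Finset.sum_apply]
    refine Finset.sum_congr rfl fun i _ => ?_
    rw [map_smul, Pi.smul_apply, smul_eq_mul, mul_comm]
  let LK : (ι → Kq) →ₗ[Kq] (Fin d → Kq) :=
    Matrix.mulVecLin (Matrix.of fun j i => algebraMap ℚ Kq (L (Pi.single i 1) j))
  have hLK : ∀ x j, LK x j = ∑ i, algebraMap ℚ Kq (L (Pi.single i 1) j) * x i := by
    intro x j
    simp [LK, Matrix.mulVec, dotProduct]
  have hker : ∀ x ∈ C, LK x = 0 → x = 0 := by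
    intro x hx h0
    by_contra hne
    obtain ⟨s, p, hsp, i, hi⟩ := exists_scale x hne
    have hmem : (fun i => algebraMap ℚ[X] Kq (p i)) ∈ C := by
      have : (fun i => algebraMap ℚ[X] Kq (p i)) = s • x := by
        ext i; simp [hsp]
      rw [this]; exact C.smul_mem _ hx
    have hS : (fun i => (p i).eval 1) ∈ S := hp p hmem
    have hL0 : L (fun i => (p i).eval 1) = 0 := by
      ext j
      rw [hLsum]
      have h1 : Red (s * LK x j) (∑ i, L (Pi.single i 1) j * (p i).eval 1) := by
        rw [hLK, Finset.mul_sum]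
        refine Red.sum _ fun i _ => ?_
        rw [mul_left_comm, hsp]
        exact (Red.const _).mul (Red.poly _)
      rw [h0, Pi.zero_apply, mul_zero] at h1
      exact h1.unique Red.zero
    have := hL' ⟨_, hS⟩
    rw [hL0] at this
    have h2 := b.equivFun.map_eq_zero_iff.mp this.symm
    exact hi (congrFun (congrArg Subtype.val h2) i)
  have hd1 : Module.finrank Kq C ≤ d := by
    have hinj : Function.Injective (LK.domRestrict C) := by
      rw [← LinearMap.ker_eq_bot, LinearMap.ker_eq_bot']
      rintro ⟨x, hx⟩ h
      exact Subtype.ext (hker x hx h)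
    simpa using LinearMap.finrank_le_finrank_of_injective hinj
  choose u huC hu using fun i => (b i).2
  have hli : LinearIndependent Kq (fun i => (⟨u i, huC i⟩ : C')) := by
    rw [Fintype.linearIndependent_iff]
    by_contra! hcon
    obtain ⟨g, hg, i0, hi0⟩ := hcon
    obtain ⟨s, p, hsp, i, hi⟩ := exists_scale g (fun h => hi0 (congrFun h i0))
    have h1 : ∑ i, (p i).eval 1 • b i = 0 := by
      apply Subtype.ext
      ext k
      have h2 : Red (s * ∑ i, g i * u i k) (∑ i, (p i).eval 1 * (b i : ι → ℚ) k) := by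
        rw [Finset.mul_sum]
        refine Red.sum _ fun i _ => ?_
        rw [← mul_assoc, hsp]
        exact (Red.poly _).mul (hu i k)
      have h3 : ∑ i, g i * u i k = 0 := by
        have := congrFun (congrArg Subtype.val hg) k
        simpa using this
      rw [h3, mul_zero] at h2
      simpa using h2.unique Red.zero
    exact hi (Fintype.linearIndependent_iff.mp b.linearIndependent _ h1 i)
  have hd2 : d ≤ Module.finrank Kq C' := by
    simpa using hli.fintype_card_le_finrank
  exact (Submodule.eq_of_le_of_finrank_le hle (hd1.trans hd2)).ge

end LeviDuality

namespace LeviDuality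

/-! ### Commutation of the generators with the Hecke operators -/

section Commute

variable {r m : ℕ}

/-- The diagonal entries of `κ_i`. -/
def kap (a : Fin (2*r+3)) (j : Idx r) : Kq :=
  if j = loI a then qv else if j = hiI a then qv⁻¹ else 1

/-- The diagonal entries of `κ_i⁻¹`. -/
def kapi (a : Fin (2*r+3)) (j : Idx r) : Kq :=
  if j = loI a then qv⁻¹ else if j = hiI a then qv else 1

/-- A tensor product of weighted relabelling operators; every tensor product occurring in the
generators has this shape. -/
def mono (c : Fin m → Idx r → Kq) (t : Fin m → Idx r → Idx r) : Module.End Kq (TP r m) :=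
  tensorOp r m fun k => diagMove r (c k) (t k)

lemma mono_apply (c : Fin m → Idx r → Kq) (t : Fin m → Idx r → Idx r) (v : TP r m)
    (g : Fin m → Idx r) :
    mono c t v g = (∏ k, c k (g k)) * v (fun k => t k (g k)) := by
  have h : ∀ f : Fin m → Idx r,
      (∏ k, (diagMove r (c k) (t k)) (Pi.single (f k) 1) (g k)) * v f =
        if f = (fun k => t k (g k)) then (∏ k, c k (g k)) * v f else 0 := by
    intro f
    simp only [diagMove, LinearMap.coe_mk, AddHom.coe_mk, Finset.prod_mul_distrib]
    split_ifs with hf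
    · subst hf
      simp
    · obtain ⟨k, hk⟩ : ∃ k, f k ≠ t k (g k) := by
        by_contra! h
        exact hf (funext h)
      rw [Finset.prod_eq_zero (Finset.mem_univ k)
        (f := fun k => (Pi.single (f k) 1 : Vb r) (t k (g k)))]
      · simp
      · simp [hk.symm]
  simp only [mono, tensorOp, matOp, LinearMap.coe_mk, AddHom.coe_mk]
  rw [Finset.sum_congr rfl fun f _ => h f]
  simp

lemma one_eq_diagMove : (1 : Module.End Kq (Vb r)) = diagMove r (fun _ => 1) id := by
  ext; simp [diagMove]

/-- Coefficients of the `j`-th summand of `𝔼_i`. -/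
def cE (a : Fin (2*r+3)) (j k : Fin m) (x : Idx r) : Kq :=
  if (k : ℕ) < j then 1 else if k = j then (if x = loI a then 1 else 0) else kapi a x

/-- Relabelling in the `j`-th summand of `𝔼_i`. -/
def tE (a : Fin (2*r+3)) (j k : Fin m) (x : Idx r) : Idx r :=
  if k = j then (if x = loI a then hiI a else x) else x

/-- Coefficients of the `j`-th summand of `𝔽_i`. -/
def cF (a : Fin (2*r+3)) (j k : Fin m) (x : Idx r) : Kq :=
  if (k : ℕ) < j then kap a x else if k = j then (if x = hiI a then 1 else 0) else 1

/-- Relabelling in the `j`-th summand of `𝔽_i`. -/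
def tF (a : Fin (2*r+3)) (j k : Fin m) (x : Idx r) : Idx r :=
  if k = j then (if x = hiI a then loI a else x) else x

lemma opEE_eq (a : Fin (2*r+3)) : opEE r m a = ∑ j, mono (cE a j) (tE a j) := by
  unfold opEE mono
  refine Finset.sum_congr rfl fun j _ => congrArg _ (funext fun k => ?_)
  unfold cE tE
  split_ifs with h1 h2 h2
  · omega
  · rw [one_eq_diagMove]; rfl
  · rfl
  · rfl

lemma opFF_eq (a : Fin (2*r+3)) : opFF r m a = ∑ j, mono (cF a j) (tF a j) := by
  unfold opFF mono
  refine Finset.sum_congr rfl fun j _ => congrArg _ (funext fun k => ?_)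
  unfold cF tF
  split_ifs with h1 h2 h2
  · omega
  · rfl
  · rfl
  · rw [one_eq_diagMove]; rfl

lemma opKK_eq (a : Fin (2*r+3)) : opKK r m a = mono (fun _ => kap a) (fun _ => id) := rfl

lemma opKKinv_eq (a : Fin (2*r+3)) : opKKinv r m a = mono (fun _ => kapi a) (fun _ => id) := rfl

section Swap

variable {p : ℕ} (h : p + 1 < m)

/-- The action of `Ψ(H_{p+1})` on functions of the two coordinates `p` and `p + 1`. -/
def tw (w : Idx r → Idx r → Kq) (x y : Idx r) : Kq :=
  if x = y then qv⁻¹ * w x y else w y x + (if y < x then (qv⁻¹ - qv) * w x y else 0)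

lemma Rsw_apply (v : TP r m) (g : Fin m → Idx r) :
    Rsw r m p v g = if g ⟨p, by omega⟩ = g ⟨p+1, h⟩ then qv⁻¹ * v g
        else v (g ∘ Equiv.swap ⟨p, by omega⟩ ⟨p+1, h⟩) +
          (if g ⟨p+1, h⟩ < g ⟨p, by omega⟩ then (qv⁻¹ - qv) * v g else 0) := by
  simp only [Rsw, dif_pos h]
  rfl

/-- A tensor whose coordinates other than `p` and `p + 1` are fixed to those of `g`. -/
def slice2 (v : TP r m) (g : Fin m → Idx r) (x y : Idx r) : Kq :=
  v (Function.update (Function.update g ⟨p, by omega⟩ x) ⟨p+1, h⟩ y)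

lemma slice2_self (v : TP r m) (g : Fin m → Idx r) :
    slice2 h v g (g ⟨p, by omega⟩) (g ⟨p+1, h⟩) = v g := by
  simp [slice2]

lemma comp_swap_apply (g : Fin m → Idx r) (k : Fin m) :
    (g ∘ Equiv.swap (⟨p, by omega⟩ : Fin m) ⟨p+1, h⟩) k =
      if k = ⟨p, by omega⟩ then g ⟨p+1, h⟩ else if k = ⟨p+1, h⟩ then g ⟨p, by omega⟩ else g k := by
  simp only [Function.comp_apply, Equiv.swap_apply_def]
  split_ifs <;> rfl

lemma slice2_swap (v : TP r m) (g : Fin m → Idx r) :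
    slice2 h v (g ∘ Equiv.swap (⟨p, by omega⟩ : Fin m) ⟨p+1, h⟩) = slice2 h v g := by
  funext x y
  refine congrArg v (funext fun k => ?_)
  simp only [Function.update_apply, comp_swap_apply]
  split_ifs <;> rfl

lemma slice2_Rsw (v : TP r m) (g : Fin m → Idx r) :
    slice2 h (Rsw r m p v) g = tw (slice2 h v g) := by
  funext x y
  have hne : (⟨p, by omega⟩ : Fin m) ≠ ⟨p+1, h⟩ := by simp
  rw [slice2, Rsw_apply h]
  have h1 : (Function.update (Function.update g ⟨p, by omega⟩ x) ⟨p+1, h⟩ y)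
      ∘ Equiv.swap (⟨p, by omega⟩ : Fin m) ⟨p+1, h⟩ =
      Function.update (Function.update g ⟨p, by omega⟩ y) ⟨p+1, h⟩ x := by
    funext k
    rw [comp_swap_apply]
    simp only [Function.update_apply]
    split_ifs <;> simp_all
  rw [h1]
  simp only [Function.update_self, Function.update_of_ne hne]
  rfl

/-- An operator acting on the coordinates `p`, `p + 1` through an operator commuting with `tw`
commutes with `Ψ(H_{p+1})`. -/
lemma commute_Rsw_of_slice (O : Module.End Kq (TP r m)) (R : (Fin m → Idx r) → Kq)
    (e2 : (Idx r → Idx r → Kq) → Idx r → Idx r → Kq)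
    (hO : ∀ v g, O v g = R g * e2 (slice2 h v g) (g ⟨p, by omega⟩) (g ⟨p+1, h⟩))
    (hR : ∀ g, R (g ∘ Equiv.swap (⟨p, by omega⟩ : Fin m) ⟨p+1, h⟩) = R g)
    (he : ∀ w, e2 (tw w) = tw (e2 w)) : O * Rsw r m p = Rsw r m p * O := by
  refine LinearMap.ext fun v => funext fun g => ?_
  simp only [Module.End.mul_apply]
  rw [hO, slice2_Rsw, he, Rsw_apply h]
  simp only [hO, hR, slice2_swap]
  simp only [Function.comp_apply, Equiv.swap_apply_left, Equiv.swap_apply_right, tw]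
  split_ifs <;> ring

lemma commute_Rsw_mono (c : Fin m → Idx r → Kq) (t : Fin m → Idx r → Idx r)
    (hc : c ⟨p, by omega⟩ = c ⟨p+1, h⟩) (ht : t ⟨p, by omega⟩ = id) (ht' : t ⟨p+1, h⟩ = id) :
    mono c t * Rsw r m p = Rsw r m p * mono c t := by
  refine LinearMap.ext fun v => funext fun g => ?_
  simp only [Module.End.mul_apply, Rsw_apply h, mono_apply, ht, ht', id]
  have h1 : ∏ k, c k ((g ∘ Equiv.swap (⟨p, by omega⟩ : Fin m) ⟨p+1, h⟩) k) =
      ∏ k, c k (g k) := by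
    rw [← Equiv.prod_comp (Equiv.swap (⟨p, by omega⟩ : Fin m) ⟨p+1, h⟩) fun k => c k (g k)]
    refine Finset.prod_congr rfl fun k _ => ?_
    rw [Function.comp_apply, Equiv.swap_apply_def]
    split_ifs with h1 h2
    · rw [h1, hc]
    · rw [h2, hc]
    · rfl
  have h2 : (fun k => t k ((g ∘ Equiv.swap (⟨p, by omega⟩ : Fin m) ⟨p+1, h⟩) k)) =
      (fun k => t k (g k)) ∘ Equiv.swap (⟨p, by omega⟩ : Fin m) ⟨p+1, h⟩ := by
    funext k
    simp only [Function.comp_apply, Equiv.swap_apply_def]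
    split_ifs with h1 h2
    · rw [h1, ht, ht']
    · rw [h2, ht, ht']
    · rfl
  rw [h1, h2]
  split_ifs <;> ring

lemma lo_lt_hi (a : Fin (2*r+3)) : loI a < hiI a := by simp [loI, hiI]

/-- The part of `𝔼_i` acting on two adjacent factors commutes with the Hecke operator there. The
equality and order conditions on `x, y` see `loI a` and `hiI a` as consecutive indices. -/
lemma tw_E (a : Fin (2*r+3)) (w : Idx r → Idx r → Kq) :
    (fun x y => (if x = loI a then 1 else 0) * kapi a y * tw w (hiI a) y +
      (if y = loI a then 1 else 0) * tw w x (hiI a)) =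
    tw fun x y => (if x = loI a then 1 else 0) * kapi a y * w (hiI a) y +
      (if y = loI a then 1 else 0) * w x (hiI a) := by
  have hq := qv_ne_zero
  have hl := lo_lt_hi a
  funext x y
  obtain ⟨u, v, hu, hv⟩ : ∃ u v, u = loI a ∧ v = hiI a := ⟨_, _, rfl, rfl⟩
  have hadj : ∀ z : Idx r, z < v ↔ z ≤ u := by
    intro z; rw [hu, hv]; simp only [loI, hiI, Fin.lt_def, Fin.le_def]; omega
  have hx := hadj x
  have hy := hadj y
  have hqq : qv * qv⁻¹ = 1 := mul_inv_cancel₀ hq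
  simp only [tw, kapi, ← hu, ← hv] at *
  generalize qv⁻¹ = qi at *
  clear hu hv hadj
  grind

/-- The analogue of `tw_E` for `𝔽_i`. -/
lemma tw_F (a : Fin (2*r+3)) (w : Idx r → Idx r → Kq) :
    (fun x y => (if x = hiI a then 1 else 0) * tw w (loI a) y +
      kap a x * (if y = hiI a then 1 else 0) * tw w x (loI a)) =
    tw fun x y => (if x = hiI a then 1 else 0) * w (loI a) y +
      kap a x * (if y = hiI a then 1 else 0) * w x (loI a) := by
  have hq := qv_ne_zero
  have hl := lo_lt_hi a
  funext x y
  obtain ⟨u, v, hu, hv⟩ : ∃ u v, u = loI a ∧ v = hiI a := ⟨_, _, rfl, rfl⟩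
  have hadj : ∀ z : Idx r, z < v ↔ z ≤ u := by
    intro z; rw [hu, hv]; simp only [loI, hiI, Fin.lt_def, Fin.le_def]; omega
  have hx := hadj x
  have hy := hadj y
  have hqq : qv * qv⁻¹ = 1 := mul_inv_cancel₀ hq
  simp only [tw, kap, ← hu, ← hv] at *
  generalize qv⁻¹ = qi at *
  clear hu hv hadj
  grind

lemma prod_pair (F : Fin m → Kq) : ∏ k, F k = F ⟨p, by omega⟩ * F ⟨p+1, h⟩ *
    ∏ k ∈ (Finset.univ.erase (⟨p, by omega⟩ : Fin m)).erase ⟨p+1, h⟩, F k := by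
  rw [mul_assoc, Finset.mul_prod_erase, Finset.mul_prod_erase]
  · simp
  · simp

lemma sum_pair (F : Fin m → Module.End Kq (TP r m)) :
    ∑ k, F k = F ⟨p, by omega⟩ + F ⟨p+1, h⟩ +
    ∑ k ∈ (Finset.univ.erase (⟨p, by omega⟩ : Fin m)).erase ⟨p+1, h⟩, F k := by
  rw [add_assoc, Finset.add_sum_erase, Finset.add_sum_erase]
  · simp
  · simp

/-- The summands `p` and `p + 1` of `𝔼_i` commute with `Ψ(H_{p+1})` only in sum; each of the others
acts on both factors by the same diagonal operator and commutes by itself. -/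
lemma opEE_commute_Rsw (h : p + 1 < m) (a : Fin (2*r+3)) : Commute (opEE r m a) (Rsw r m p) := by
  rw [opEE_eq, sum_pair h]
  refine Commute.add_left ?_ (Commute.sum_left _ _ _ fun j hj => ?_)
  · refine commute_Rsw_of_slice h _
      (fun g => ∏ k ∈ (Finset.univ.erase (⟨p, by omega⟩ : Fin m)).erase ⟨p+1, h⟩,
        cE a ⟨p, by omega⟩ k (g k))
      (fun w x y => (if x = loI a then 1 else 0) * kapi a y * w (hiI a) y +
        (if y = loI a then 1 else 0) * w x (hiI a)) ?_ ?_ (tw_E a)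
    · intro v g
      simp only [LinearMap.add_apply, Pi.add_apply, mono_apply, prod_pair h]
      have h1 : ∏ k ∈ (Finset.univ.erase (⟨p, by omega⟩ : Fin m)).erase ⟨p+1, h⟩,
          cE a ⟨p+1, h⟩ k (g k) =
          ∏ k ∈ (Finset.univ.erase (⟨p, by omega⟩ : Fin m)).erase ⟨p+1, h⟩,
          cE a ⟨p, by omega⟩ k (g k) := by
        refine Finset.prod_congr rfl fun k hk => ?_
        simp only [Finset.mem_erase, ne_eq, Fin.ext_iff] at hk
        unfold cE
        simp only [Fin.ext_iff]
        split_ifs <;> first | rfl | omega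
      rw [h1]
      have h2 : g ⟨p, by omega⟩ = loI a →
          (fun k => tE a ⟨p, by omega⟩ k (g k)) =
          Function.update (Function.update g ⟨p, by omega⟩ (hiI a)) ⟨p+1, h⟩ (g ⟨p+1, h⟩) := by
        intro hx
        funext k
        unfold tE
        simp only [Function.update_apply]
        split_ifs <;> simp_all
      have h3 : g ⟨p+1, h⟩ = loI a →
          (fun k => tE a ⟨p+1, h⟩ k (g k)) =
          Function.update (Function.update g ⟨p, by omega⟩ (g ⟨p, by omega⟩)) ⟨p+1, h⟩ (hiI a) := by
        intro hx
        funext k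
        unfold tE
        simp only [Function.update_apply]
        split_ifs <;> simp_all
      by_cases hP : g ⟨p, by omega⟩ = loI a <;> by_cases hQ : g ⟨p+1, h⟩ = loI a
      · rw [h2 hP, h3 hQ]
        simp [cE, hP, hQ, slice2]
        ring
      · rw [h2 hP]
        simp [cE, hP, hQ, slice2]
        ring
      · rw [h3 hQ]
        simp [cE, hP, hQ, slice2]
      · simp [cE, hP, hQ]
    · intro g
      refine Finset.prod_congr rfl fun k hk => ?_
      simp only [Finset.mem_erase] at hk
      rw [comp_swap_apply, if_neg hk.2.1, if_neg hk.1]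
  · simp only [Finset.mem_erase, ne_eq, Fin.ext_iff, Finset.mem_univ, and_true] at hj
    refine commute_Rsw_mono h _ _ ?_ ?_ ?_ <;> funext x <;> simp only [cE, tE, Fin.ext_iff, id]
    all_goals split_ifs <;> first | rfl | omega

lemma opFF_commute_Rsw (h : p + 1 < m) (a : Fin (2*r+3)) : Commute (opFF r m a) (Rsw r m p) := by
  rw [opFF_eq, sum_pair h]
  refine Commute.add_left ?_ (Commute.sum_left _ _ _ fun j hj => ?_)
  · refine commute_Rsw_of_slice h _
      (fun g => ∏ k ∈ (Finset.univ.erase (⟨p, by omega⟩ : Fin m)).erase ⟨p+1, h⟩,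
        cF a ⟨p, by omega⟩ k (g k))
      (fun w x y => (if x = hiI a then 1 else 0) * w (loI a) y +
        kap a x * (if y = hiI a then 1 else 0) * w x (loI a)) ?_ ?_ (tw_F a)
    · intro v g
      simp only [LinearMap.add_apply, Pi.add_apply, mono_apply, prod_pair h]
      have h1 : ∏ k ∈ (Finset.univ.erase (⟨p, by omega⟩ : Fin m)).erase ⟨p+1, h⟩,
          cF a ⟨p+1, h⟩ k (g k) =
          ∏ k ∈ (Finset.univ.erase (⟨p, by omega⟩ : Fin m)).erase ⟨p+1, h⟩,
          cF a ⟨p, by omega⟩ k (g k) := by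
        refine Finset.prod_congr rfl fun k hk => ?_
        simp only [Finset.mem_erase, ne_eq, Fin.ext_iff] at hk
        unfold cF
        simp only [Fin.ext_iff]
        split_ifs <;> first | rfl | omega
      rw [h1]
      have h2 : g ⟨p, by omega⟩ = hiI a →
          (fun k => tF a ⟨p, by omega⟩ k (g k)) =
          Function.update (Function.update g ⟨p, by omega⟩ (loI a)) ⟨p+1, h⟩ (g ⟨p+1, h⟩) := by
        intro hx
        funext k
        unfold tF
        simp only [Function.update_apply]
        split_ifs <;> simp_all
      have h3 : g ⟨p+1, h⟩ = hiI a →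
          (fun k => tF a ⟨p+1, h⟩ k (g k)) =
          Function.update (Function.update g ⟨p, by omega⟩ (g ⟨p, by omega⟩)) ⟨p+1, h⟩ (loI a) := by
        intro hx
        funext k
        unfold tF
        simp only [Function.update_apply]
        split_ifs <;> simp_all
      by_cases hP : g ⟨p, by omega⟩ = hiI a <;> by_cases hQ : g ⟨p+1, h⟩ = hiI a
      · rw [h2 hP, h3 hQ]
        simp [cF, hP, hQ, slice2]
        ring
      · rw [h2 hP]
        simp [cF, hP, hQ, slice2]
      · rw [h3 hQ]
        simp [cF, hP, hQ, slice2]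
        ring
      · simp [cF, hP, hQ]
    · intro g
      refine Finset.prod_congr rfl fun k hk => ?_
      simp only [Finset.mem_erase] at hk
      rw [comp_swap_apply, if_neg hk.2.1, if_neg hk.1]
  · simp only [Finset.mem_erase, ne_eq, Fin.ext_iff, Finset.mem_univ, and_true] at hj
    refine commute_Rsw_mono h _ _ ?_ ?_ ?_ <;> funext x <;> simp only [cF, tF, Fin.ext_iff, id]
    all_goals split_ifs <;> first | rfl | omega

lemma opKK_commute_Rsw (h : p + 1 < m) (a : Fin (2*r+3)) : Commute (opKK r m a) (Rsw r m p) :=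
  commute_Rsw_mono h _ _ rfl rfl rfl

lemma opKKinv_commute_Rsw (h : p + 1 < m) (a : Fin (2*r+3)) : Commute (opKKinv r m a) (Rsw r m p) :=
  commute_Rsw_mono h _ _ rfl rfl rfl

end Swap

section Flip

variable (h : 0 < m)

/-- The action of `Ψ(H_0)` on functions of the first coordinate. -/
def fl (w : Idx r → Kq) (x : Idx r) : Kq :=
  w (Fin.rev x) + (if x < Fin.rev x then (qv⁻¹ - qv) * w x else 0)

lemma R0op_apply (v : TP r m) (g : Fin m → Idx r) :
    R0op r m v g = v (Function.update g ⟨0, h⟩ (Fin.rev (g ⟨0, h⟩))) +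
          (if g ⟨0, h⟩ < Fin.rev (g ⟨0, h⟩) then (qv⁻¹ - qv) * v g else 0) := by
  simp only [R0op, dif_pos h]
  rfl

/-- An operator acting on the first coordinate through an operator commuting with `fl`
commutes with `Ψ(H_0)`. -/
lemma commute_R0_of_slice (O : Module.End Kq (TP r m)) (R : (Fin m → Idx r) → Kq)
    (e1 : (Idx r → Kq) → Idx r → Kq)
    (hO : ∀ v g, O v g = R g * e1 (fun x => v (Function.update g ⟨0, h⟩ x)) (g ⟨0, h⟩))
    (hR : ∀ g x, R (Function.update g ⟨0, h⟩ x) = R g)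
    (he : ∀ w, e1 (fl w) = fl (e1 w)) : O * R0op r m = R0op r m * O := by
  refine LinearMap.ext fun v => funext fun g => ?_
  simp only [Module.End.mul_apply]
  have h1 : (fun x => R0op r m v (Function.update g ⟨0, h⟩ x)) =
      fl fun x => v (Function.update g ⟨0, h⟩ x) := by
    funext x
    rw [R0op_apply h]
    simp [fl]
  rw [hO, h1, he, R0op_apply h]
  simp only [hO, hR, Function.update_self, Function.update_idem, fl]
  split_ifs <;> ring

lemma commute_R0_mono (c : Fin m → Idx r → Kq) (t : Fin m → Idx r → Idx r)
    (hc : ∀ x, c ⟨0, h⟩ (Fin.rev x) = c ⟨0, h⟩ x) (ht : t ⟨0, h⟩ = id) :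
    mono c t * R0op r m = R0op r m * mono c t := by
  refine LinearMap.ext fun v => funext fun g => ?_
  simp only [Module.End.mul_apply, R0op_apply h, mono_apply, ht, id]
  have h1 : ∏ k, c k (Function.update g ⟨0, h⟩ (Fin.rev (g ⟨0, h⟩)) k) = ∏ k, c k (g k) := by
    refine Finset.prod_congr rfl fun k _ => ?_
    by_cases hk : k = ⟨0, h⟩
    · subst hk; simp [hc]
    · simp [hk]
  have h2 : (fun k => t k (Function.update g ⟨0, h⟩ (Fin.rev (g ⟨0, h⟩)) k)) =
      Function.update (fun k => t k (g k)) ⟨0, h⟩ (Fin.rev (g ⟨0, h⟩)) := by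
    funext k
    by_cases hk : k = ⟨0, h⟩
    · subst hk; simp [ht]
    · simp [hk]
  rw [h1, h2]
  split_ifs <;> ring

lemma mono_mul_diag (c c' : Fin m → Idx r → Kq) (t : Fin m → Idx r → Idx r) :
    mono c t * mono c' (fun _ => id) = mono (fun k x => c k x * c' k (t k x)) t := by
  refine LinearMap.ext fun v => funext fun g => ?_
  simp only [Module.End.mul_apply, mono_apply, id, Finset.prod_mul_distrib]
  ring

lemma kap_rev (a : Fin (2*r+3)) (x : Idx r) : kap a.rev x.rev = kapi a x := by
  have h1 : x.rev = loI a.rev ↔ x = hiI a := by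
    simp only [loI, hiI, Fin.ext_iff, Fin.val_rev]; omega
  have h2 : x.rev = hiI a.rev ↔ x = loI a := by
    simp only [loI, hiI, Fin.ext_iff, Fin.val_rev]; omega
  have h3 : loI a ≠ hiI a := (lo_lt_hi a).ne
  simp only [kap, kapi, h1, h2]
  split_ifs <;> simp_all

/-- The summands of `𝔼_i` and `𝔽_{-i}𝕂_i⁻¹` acting off the first coordinate. -/
lemma commute_R0_off (a : Fin (2*r+3)) (j : Fin m) (hj : j ≠ ⟨0, h⟩) :
    Commute (mono (cE a j) (tE a j)) (R0op r m) ∧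
    Commute (mono (cF a.rev j) (tF a.rev j) * opKKinv r m a) (R0op r m) := by
  have hj' : 0 < (j : ℕ) := by
    rw [ne_eq, Fin.ext_iff] at hj
    exact Nat.pos_of_ne_zero hj
  constructor
  · refine commute_R0_mono h _ _ (fun x => ?_) (funext fun x => ?_)
    · simp [cE, hj']
    · simp [tE, hj.symm]
  · rw [opKKinv_eq, mono_mul_diag]
    refine commute_R0_mono h _ _ (fun x => ?_) (funext fun x => ?_)
    · have h1 := kap_rev a x
      have h2 := kap_rev a x.rev
      rw [Fin.rev_rev] at h2
      simp [cF, tF, hj', hj.symm, h1, ← h2, mul_comm]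
    · simp [tF, hj.symm]

/-- The parts of `𝔼_i`, `𝔽_{-i}𝕂_i⁻¹` and `𝕂_i⁻¹` which involve the first coordinate act by `κ_i⁻¹` on
all other coordinates, a common factor which the action of `Ψ(H_0)` does not see. -/
lemma first_apply (a : Fin (2*r+3)) (v : TP r m) (g : Fin m → Idx r) :
    mono (cE a ⟨0, h⟩) (tE a ⟨0, h⟩) v g =
      (∏ k ∈ Finset.univ.erase (⟨0, h⟩ : Fin m), kapi a (g k)) *
        ((if g ⟨0, h⟩ = loI a then 1 else 0) * v (Function.update g ⟨0, h⟩ (hiI a))) ∧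
    (mono (cF a.rev ⟨0, h⟩) (tF a.rev ⟨0, h⟩) * opKKinv r m a) v g =
      (∏ k ∈ Finset.univ.erase (⟨0, h⟩ : Fin m), kapi a (g k)) *
        ((if g ⟨0, h⟩ = hiI a.rev then 1 else 0) * kapi a (loI a.rev) *
          v (Function.update g ⟨0, h⟩ (loI a.rev))) ∧
    opKKinv r m a v g =
      (∏ k ∈ Finset.univ.erase (⟨0, h⟩ : Fin m), kapi a (g k)) * (kapi a (g ⟨0, h⟩) * v g) := by
  refine ⟨?_, ?_, ?_⟩
  · rw [mono_apply, ← Finset.mul_prod_erase _ _ (Finset.mem_univ (⟨0, h⟩ : Fin m))]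
    have h1 : ∏ k ∈ Finset.univ.erase (⟨0, h⟩ : Fin m), cE a ⟨0, h⟩ k (g k) =
        ∏ k ∈ Finset.univ.erase (⟨0, h⟩ : Fin m), kapi a (g k) := by
      refine Finset.prod_congr rfl fun k hk => ?_
      simp only [Finset.mem_erase] at hk
      simp [cE, hk.1]
    rw [h1]
    by_cases h0 : g ⟨0, h⟩ = loI a
    · have h2 : (fun k => tE a ⟨0, h⟩ k (g k)) = Function.update g ⟨0, h⟩ (hiI a) := by
        funext k
        unfold tE
        rw [Function.update_apply]
        split_ifs <;> simp_all
      rw [h2]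
      simp [cE, h0]
    · simp [cE, h0]
  · rw [opKKinv_eq, mono_mul_diag, mono_apply,
      ← Finset.mul_prod_erase _ _ (Finset.mem_univ (⟨0, h⟩ : Fin m))]
    have h1 : ∏ k ∈ Finset.univ.erase (⟨0, h⟩ : Fin m),
        (cF a.rev ⟨0, h⟩ k (g k) * kapi a (tF a.rev ⟨0, h⟩ k (g k))) =
        ∏ k ∈ Finset.univ.erase (⟨0, h⟩ : Fin m), kapi a (g k) := by
      refine Finset.prod_congr rfl fun k hk => ?_
      simp only [Finset.mem_erase] at hk
      simp [cF, tF, hk.1]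
    rw [h1]
    by_cases h0 : g ⟨0, h⟩ = hiI a.rev
    · have h2 : (fun k => tF a.rev ⟨0, h⟩ k (g k)) =
          Function.update g ⟨0, h⟩ (loI a.rev) := by
        funext k
        unfold tF
        rw [Function.update_apply]
        split_ifs <;> simp_all
      rw [h2]
      simp [cF, tF, h0]
      ring
    · simp [cF, h0]
  · rw [opKKinv_eq, mono_apply, ← Finset.mul_prod_erase _ _ (Finset.mem_univ (⟨0, h⟩ : Fin m))]
    simp only [id]
    ring

lemma opB_commute_R0 (h : 0 < m) (a : Fin (2*r+3)) (ha : a ≠ midI r) : Commute (opB r m a) (R0op r m) := by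
  rw [opB, opEE_eq, opFF_eq, Finset.sum_mul, ← Finset.sum_add_distrib,
    ← Finset.add_sum_erase _ _ (Finset.mem_univ (⟨0, h⟩ : Fin m))]
  refine Commute.add_left ?_ (Commute.sum_left _ _ _ fun j hj => ?_)
  · refine commute_R0_of_slice h _
      (fun g => ∏ k ∈ Finset.univ.erase (⟨0, h⟩ : Fin m), kapi a (g k))
      (fun w x => (if x = loI a then 1 else 0) * w (hiI a) +
        (if x = hiI a.rev then 1 else 0) * kapi a (loI a.rev) * w (loI a.rev)) ?_ ?_ ?_
    · intro v g
      obtain ⟨h1, h2, -⟩ := first_apply h a v g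
      rw [LinearMap.add_apply, Pi.add_apply, h1, h2, mul_add]
    · intro g x
      refine Finset.prod_congr rfl fun k hk => ?_
      simp only [Finset.mem_erase] at hk
      simp [hk.1]
    · intro w
      have h1 : hiI a.rev = (loI a).rev := by
        simp only [loI, hiI, Fin.ext_iff, Fin.val_rev]; omega
      have h2 : loI a.rev = (hiI a).rev := by
        simp only [loI, hiI, Fin.ext_iff, Fin.val_rev]; omega
      have h3 : kapi a (hiI a).rev = 1 := by
        rw [kapi, if_neg, if_neg]
        · simp only [hiI, Fin.ext_iff, Fin.val_rev]; omega
        · simp only [loI, hiI, ne_eq, midI, Fin.ext_iff, Fin.val_rev] at ha ⊢; omega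
      have h4 : loI a < (loI a).rev ↔ hiI a < (hiI a).rev := by
        simp only [loI, hiI, ne_eq, midI, Fin.ext_iff, Fin.lt_def, Fin.val_rev] at ha ⊢; omega
      funext x
      have h5 : x.rev = loI a ↔ x = (loI a).rev := Fin.rev_eq_iff
      have h6 : x.rev = (loI a).rev ↔ x = loI a := Fin.rev_inj
      have h7 : loI a ≠ (loI a).rev := by
        simp only [loI, ne_eq, Fin.ext_iff, Fin.val_rev]; omega
      have h8 : (loI a).rev < loI a ↔ (hiI a).rev < hiI a := by
        simp only [loI, hiI, ne_eq, midI, Fin.ext_iff, Fin.lt_def, Fin.val_rev] at ha ⊢; omega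
      have h9 := Fin.rev_rev (hiI a)
      have h10 := Fin.rev_rev (loI a)
      simp only [fl, h1, h2, h3, h5, h6, h9]
      by_cases hx : x = loI a
      · subst hx
        simp [h7, h4]
      · by_cases hx' : x = (loI a).rev
        · subst hx'
          simp [h8, h7.symm]
        · simp [hx, hx']
  · obtain ⟨h1, h2⟩ := commute_R0_off h a j (Finset.mem_erase.mp hj).1
    exact h1.add_left h2

lemma opB0_commute_R0 (h : 0 < m) : Commute (opB0 r m) (R0op r m) := by
  have hrev : (midI r).rev = midI r := by
    simp only [midI, Fin.ext_iff, Fin.val_rev]; omega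
  have h0 : opB0 r m = (mono (cE (midI r) ⟨0, h⟩) (tE (midI r) ⟨0, h⟩) +
      qv • (mono (cF (midI r) ⟨0, h⟩) (tF (midI r) ⟨0, h⟩) * opKKinv r m (midI r)) +
        opKKinv r m (midI r)) +
      ∑ j ∈ Finset.univ.erase (⟨0, h⟩ : Fin m), (mono (cE (midI r) j) (tE (midI r) j) +
        qv • (mono (cF (midI r) j) (tF (midI r) j) * opKKinv r m (midI r))) := by
    rw [opB0, opEE_eq, opFF_eq, Finset.sum_mul, Finset.smul_sum, ← Finset.sum_add_distrib,
      ← Finset.add_sum_erase _ _ (Finset.mem_univ (⟨0, h⟩ : Fin m))]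
    abel
  rw [h0]
  refine Commute.add_left ?_ (Commute.sum_left _ _ _ fun j hj => ?_)
  · refine commute_R0_of_slice h _
      (fun g => ∏ k ∈ Finset.univ.erase (⟨0, h⟩ : Fin m), kapi (midI r) (g k))
      (fun w x => (if x = loI (midI r) then 1 else 0) * w (hiI (midI r)) +
        qv * ((if x = hiI (midI r) then 1 else 0) * kapi (midI r) (loI (midI r))
          * w (loI (midI r))) + kapi (midI r) x * w x) ?_ ?_ ?_
    · intro v g
      obtain ⟨h1, h2, h3⟩ := first_apply h (midI r) v g
      rw [hrev] at h2
      rw [LinearMap.add_apply, Pi.add_apply, LinearMap.add_apply, Pi.add_apply,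
        LinearMap.smul_apply, Pi.smul_apply, h1, h2, h3, smul_eq_mul]
      simp only [Function.update_eq_self]
      ring
    · intro g x
      refine Finset.prod_congr rfl fun k hk => ?_
      simp only [Finset.mem_erase] at hk
      simp [hk.1]
    · intro w
      have h1 : (loI (midI r)).rev = hiI (midI r) := by
        simp only [loI, hiI, midI, Fin.ext_iff, Fin.val_rev]; omega
      have h2 : (hiI (midI r)).rev = loI (midI r) := by
        simp only [loI, hiI, midI, Fin.ext_iff, Fin.val_rev]; omega
      have h3 := lo_lt_hi (midI r)
      have hq := qv_ne_zero
      funext x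
      have h5 : x.rev = loI (midI r) ↔ x = hiI (midI r) := by rw [Fin.rev_eq_iff, h1]
      have h6 : x.rev = hiI (midI r) ↔ x = loI (midI r) := by rw [Fin.rev_eq_iff, h2]
      simp only [fl, kapi, h1, h2, h5, h6]
      by_cases hx : x = loI (midI r)
      · subst hx
        simp [h1, h3, h3.ne, h3.not_gt]
        field_simp
        ring
      · by_cases hx' : x = hiI (midI r)
        · subst hx'
          simp [h2, h3, h3.not_gt, h3.ne']
          field_simp
          try ring
        · simp [hx, hx']
  · obtain ⟨h1, h2⟩ := commute_R0_off h (midI r) j (Finset.mem_erase.mp hj).1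
    rw [hrev] at h2
    exact h1.add_left (h2.smul_left qv)

lemma opKK_mul_opKKinv_commute_R0 (h : 0 < m) (a : Fin (2*r+3)) :
    Commute (opKK r m a * opKKinv r m a.rev) (R0op r m) := by
  rw [opKK_eq, opKKinv_eq, mono_mul_diag]
  refine commute_R0_mono h _ _ (fun x => ?_) rfl
  have h1 := kap_rev a.rev x
  have h2 := kap_rev a.rev x.rev
  rw [Fin.rev_rev] at h1 h2
  rw [Fin.rev_rev] at h2
  simp [h1, ← h2, mul_comm]

end Flip

/-- The generators of `Φ(L_q^ı)` commute with the Hecke operators. -/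
theorem levi_commute_RopN {i : ℕ} (hi : i < m) {B : Module.End Kq (TP r m)}
    (hB : B ∈ LeviSet r m) : Commute B (RopN r m i) := by
  have hm : 0 < m := by omega
  unfold RopN
  split_ifs with hi0
  · rcases hB with ((rfl | ⟨a, ha, rfl⟩) | ⟨a, rfl⟩) | ⟨a, rfl⟩
    · exact opB0_commute_R0 hm
    · exact opB_commute_R0 hm a ha.1
    · exact opKK_mul_opKKinv_commute_R0 hm a
    · have := opKK_mul_opKKinv_commute_R0 (m := m) hm a.rev
      rwa [Fin.rev_rev] at this
  · have hp : (i - 1) + 1 < m := by omega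
    rcases hB with ((rfl | ⟨a, ha, rfl⟩) | ⟨a, rfl⟩) | ⟨a, rfl⟩
    · rw [opB0]
      exact ((opEE_commute_Rsw hp _).add_left
        (((opFF_commute_Rsw hp _).mul_left (opKKinv_commute_Rsw hp _)).smul_left qv)).add_left
          (opKKinv_commute_Rsw hp _)
    · rw [opB]
      exact (opEE_commute_Rsw hp _).add_left
        ((opFF_commute_Rsw hp _).mul_left (opKKinv_commute_Rsw hp _))
    · rw [opkk]
      exact (opKK_commute_Rsw hp _).mul_left (opKKinv_commute_Rsw hp _)
    · rw [opkkInv]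
      exact (opKK_commute_Rsw hp a.rev).mul_left (opKKinv_commute_Rsw hp a)

end Commute
end LeviDuality

namespace LeviDuality

/-! ### The idempotents `x_e^(l)` -/

section Proj

variable {r m : ℕ}

open Classical in
/-- The coordinate projection of `V̄^⊗m` onto `V^⊗l ⊗ η_{r+3/2}^⊗(m-l)`. -/
def proj (r m l : ℕ) : Module.End Kq (TP r m) where
  toFun v g := if goodF r m l g then v g else 0
  map_add' u v := by
    funext g
    simp only [Pi.add_apply]
    split_ifs <;> simp
  map_smul' s v := by
    funext g
    simp only [Pi.smul_apply, RingHom.id_apply]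
    split_ifs <;> simp

open Classical in
lemma proj_apply (l : ℕ) (v : TP r m) (g : Fin m → Idx r) :
    proj r m l v g = if goodF r m l g then v g else 0 := rfl

lemma goodF_congr {l : ℕ} {f g : Fin m → Idx r}
    (h : ∀ k, f k = g k ∨ (innerI r (f k) ∧ innerI r (g k))) :
    goodF r m l f ↔ goodF r m l g := by
  refine forall_congr' fun k => ?_
  rcases h k with h | ⟨h1, h2⟩
  · rw [h]
  · have h3 : f k ≠ topI r := h1.2
    have h4 : g k ≠ topI r := h2.2
    simp [h1, h2, h3, h4]

lemma mono_commute_proj (l : ℕ) (c : Fin m → Idx r → Kq) (t : Fin m → Idx r → Idx r)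
    (ht : ∀ k x, t k x = x ∨ (innerI r (t k x) ∧ innerI r x)) :
    Commute (mono c t) (proj r m l) := by
  refine LinearMap.ext fun v => funext fun g => ?_
  have h := goodF_congr (l := l) (f := fun k => t k (g k)) (g := g) fun k => ht k (g k)
  simp only [Module.End.mul_apply, proj_apply, mono_apply]
  by_cases hg : goodF r m l g
  · rw [if_pos (h.mpr hg), if_pos hg]
  · rw [if_neg fun h' => hg (h.mp h'), if_neg hg, mul_zero]

lemma opEE_commute_proj (l : ℕ) (a : Fin (2*r+3)) (h0 : 0 < (a : ℕ)) (h1 : (a : ℕ) < 2*r+2) :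
    Commute (opEE r m a) (proj r m l) := by
  rw [opEE_eq]
  refine Commute.sum_left _ _ _ fun j _ => mono_commute_proj l _ _ fun k x => ?_
  unfold tE
  split_ifs with h2 h3
  · subst h3
    right
    simp only [innerI, loI, hiI, botI, topI, ne_eq, Fin.ext_iff]
    omega
  · simp
  · simp

lemma opFF_commute_proj (l : ℕ) (a : Fin (2*r+3)) (h0 : 0 < (a : ℕ)) (h1 : (a : ℕ) < 2*r+2) :
    Commute (opFF r m a) (proj r m l) := by
  rw [opFF_eq]
  refine Commute.sum_left _ _ _ fun j _ => mono_commute_proj l _ _ fun k x => ?_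
  unfold tF
  split_ifs with h2 h3
  · subst h3
    right
    simp only [innerI, loI, hiI, botI, topI, ne_eq, Fin.ext_iff]
    omega
  · simp
  · simp

lemma opKK_commute_proj (l : ℕ) (a : Fin (2*r+3)) : Commute (opKK r m a) (proj r m l) :=
  mono_commute_proj l _ _ fun _ _ => Or.inl rfl

lemma opKKinv_commute_proj (l : ℕ) (a : Fin (2*r+3)) : Commute (opKKinv r m a) (proj r m l) :=
  mono_commute_proj l _ _ fun _ _ => Or.inl rfl

/-- The generators of `Φ(L_q^ı)` commute with the idempotents `x_e^(l)`: the indices `±(r+1)`,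
which would link `V` to its complement, occur in no `ℬ_i`. -/
theorem levi_commute_proj (l : ℕ) {B : Module.End Kq (TP r m)} (hB : B ∈ LeviSet r m) :
    Commute B (proj r m l) := by
  rcases hB with ((rfl | ⟨a, ⟨-, ha, ha'⟩, rfl⟩) | ⟨a, rfl⟩) | ⟨a, rfl⟩
  · have h0 : 0 < ((midI r : Fin (2*r+3)) : ℕ) := by simp [midI]
    have hr : ((midI r : Fin (2*r+3)) : ℕ) < 2*r+2 := by simp only [midI]; omega
    rw [opB0]
    exact ((opEE_commute_proj l _ h0 hr).add_left
      (((opFF_commute_proj l _ h0 hr).mul_left (opKKinv_commute_proj l _)).smul_left qv)).add_left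
        (opKKinv_commute_proj l _)
  · rw [opB]
    have h2 : ((a.rev : Fin (2*r+3)) : ℕ) = 2*r+2 - a := by rw [Fin.val_rev]; omega
    exact (opEE_commute_proj l a ha ha').add_left
      ((opFF_commute_proj l a.rev (by omega) (by omega)).mul_left (opKKinv_commute_proj l a))
  · rw [opkk]
    exact (opKK_commute_proj l a).mul_left (opKKinv_commute_proj l a.rev)
  · rw [opkkInv]
    exact (opKK_commute_proj l a.rev).mul_left (opKKinv_commute_proj l a)

lemma opPerm_one (l : ℕ) : opPerm r m (1 : Equiv.Perm (Fin l)) = 1 := by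
  have h : lenPerm (1 : Equiv.Perm (Fin l)) = 0 := by
    unfold lenPerm
    rw [Finset.card_eq_zero, Finset.filter_eq_empty_iff]
    rintro ⟨a, b⟩ - ⟨h1, h2⟩
    exact h1.not_gt h2
  simp [opPerm, permWord, h, permWordAux]

lemma Mf_apply (f g : Fin m → Idx r) : (Mf f : TP r m) g = if g = f then 1 else 0 := by
  rw [Mf, Pi.single_apply]

lemma eq_sum_Mf (v : TP r m) : v = ∑ f, v f • Mf f := by
  funext g
  simp [Finset.sum_apply, Mf_apply]

lemma end_ext {A B : Module.End Kq (TP r m)} (h : ∀ f, A (Mf f) = B (Mf f)) : A = B := by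
  refine LinearMap.ext fun v => ?_
  rw [eq_sum_Mf v, map_sum, map_sum]
  exact Finset.sum_congr rfl fun f _ => by rw [map_smul, map_smul, h]

lemma eq_proj {l : ℕ} {X : Module.End Kq (TP r m)}
    (h1 : ∀ v ∈ Vsub r m l, X v = opPerm r m (1 : Equiv.Perm (Fin l)) v)
    (h0 : ∀ f : Fin m → Idx r, ¬ goodF r m l f → X (Mf f) = 0) : X = proj r m l := by
  refine end_ext fun f => ?_
  by_cases hf : goodF r m l f
  · rw [h1 _ (Submodule.subset_span ⟨f, hf, rfl⟩), opPerm_one]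
    funext g
    rw [proj_apply, Mf_apply, Module.End.one_apply, Mf_apply]
    split_ifs <;> simp_all
  · rw [h0 f hf]
    funext g
    rw [proj_apply, Mf_apply]
    split_ifs <;> simp_all

end Proj
end LeviDuality

namespace LeviDuality

/-! ### Tensor products of matrices -/

section Tensor

variable {m : ℕ} {N : Type*} [Fintype N] [DecidableEq N]

set_option linter.unusedSectionVars false

/-- The tensor product of matrices, with rows and columns indexed by functions `Fin m → N`. -/
def tensor (A : Fin m → Matrix N N ℚ) : Matrix (Fin m → N) (Fin m → N) ℚ :=
  Matrix.of fun g f => ∏ k, A k (g k) (f k)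

lemma tensor_apply (A : Fin m → Matrix N N ℚ) (g f : Fin m → N) :
    tensor A g f = ∏ k, A k (g k) (f k) := rfl

lemma tensor_one : tensor (1 : Fin m → Matrix N N ℚ) = 1 := by
  ext g f
  rw [tensor_apply]
  by_cases h : g = f
  · subst h; simp
  · obtain ⟨k, hk⟩ : ∃ k, g k ≠ f k := by
      by_contra! h'
      exact h (funext h')
    rw [Matrix.one_apply_ne h]
    exact Finset.prod_eq_zero (Finset.mem_univ k) (by simp [Matrix.one_apply_ne hk])

lemma tensor_mul (A B : Fin m → Matrix N N ℚ) : tensor (A * B) = tensor A * tensor B := by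
  ext g f
  simp only [Matrix.mul_apply, tensor_apply, Pi.mul_apply, ← Finset.prod_mul_distrib]
  rw [Finset.prod_univ_sum]
  simp

/-- `X` acting in the tensor position `k`. -/
def atPos (k : Fin m) (X : Matrix N N ℚ) : Matrix (Fin m → N) (Fin m → N) ℚ :=
  tensor (Pi.mulSingle k X)

lemma atPos_apply (k : Fin m) (X : Matrix N N ℚ) (g f : Fin m → N) :
    atPos k X g f = X (g k) (f k) *
      ∏ j ∈ Finset.univ.erase k, (1 : Matrix N N ℚ) (g j) (f j) := by
  rw [atPos, tensor_apply, ← Finset.mul_prod_erase _ _ (Finset.mem_univ k), Pi.mulSingle_eq_same]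
  congr 1
  refine Finset.prod_congr rfl fun j hj => ?_
  rw [Pi.mulSingle_eq_of_ne (Finset.ne_of_mem_erase hj)]

lemma atPos_mul (k : Fin m) (X Y : Matrix N N ℚ) :
    atPos k (X * Y) = atPos k X * atPos k Y := by
  rw [atPos, Pi.mulSingle_mul, tensor_mul]; rfl

lemma atPos_comm {k l : Fin m} (h : k ≠ l) (X Y : Matrix N N ℚ) :
    atPos k X * atPos l Y = atPos l Y * atPos k X := by
  rw [atPos, atPos, ← tensor_mul, ← tensor_mul]
  have h1 := Pi.mulSingle_commute (f := fun _ : Fin m => Matrix N N ℚ) h X Y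
  rw [h1.eq]

/-- The diagonal action `∑ₖ 1 ⊗ ⋯ ⊗ X ⊗ ⋯ ⊗ 1` of a matrix on the tensor power. -/
def dia : Matrix N N ℚ →ₗ[ℚ] Matrix (Fin m → N) (Fin m → N) ℚ where
  toFun X := ∑ k, atPos k X
  map_add' X Y := by
    rw [← Finset.sum_add_distrib]
    refine Finset.sum_congr rfl fun k _ => ?_
    ext g f
    simp only [atPos_apply, Matrix.add_apply, add_mul]
  map_smul' c X := by
    rw [Finset.smul_sum]
    refine Finset.sum_congr rfl fun k _ => ?_
    ext g f
    simp only [atPos_apply, Matrix.smul_apply, smul_eq_mul, mul_assoc, RingHom.id_apply]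

lemma dia_apply (X : Matrix N N ℚ) : dia (m := m) X = ∑ k, atPos k X := rfl

lemma dia_one : dia (m := m) (1 : Matrix N N ℚ) = (m : ℚ) • 1 := by
  simp [dia_apply, atPos, tensor_one, Nat.cast_smul_eq_nsmul]

/-- The diagonal action is a Lie algebra homomorphism. -/
lemma dia_bracket (X Y : Matrix N N ℚ) :
    dia (m := m) (X * Y - Y * X) = dia X * dia Y - dia Y * dia X := by
  simp only [map_sub, dia_apply, Finset.sum_mul, Finset.mul_sum]
  rw [Finset.sum_comm (f := fun k l => atPos l Y * atPos k X), ← Finset.sum_sub_distrib,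
    ← Finset.sum_sub_distrib]
  refine Finset.sum_congr rfl fun k _ => ?_
  rw [← Finset.sum_sub_distrib, Finset.sum_eq_single k]
  · rw [atPos_mul, atPos_mul]
  · intro l _ hl
    rw [atPos_comm hl, sub_self]
  · simp

lemma dia_diagonal (y : N → ℚ) (g f : Fin m → N) :
    dia (Matrix.diagonal y) g f = if g = f then ∑ k, y (g k) else 0 := by
  rw [dia_apply, Matrix.sum_apply]
  by_cases h : g = f
  · subst h
    simp [atPos_apply]
  · rw [if_neg h]
    obtain ⟨k, hk⟩ : ∃ k, g k ≠ f k := by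
      by_contra! h'
      exact h (funext h')
    refine Finset.sum_eq_zero fun j _ => ?_
    rw [atPos_apply]
    by_cases hj : j = k
    · subst hj
      simp [hk]
    · rw [Finset.prod_eq_zero (i := k), mul_zero]
      · simp [Ne.symm hj]
      · simp [hk]

/-! ### Symmetric tensors generated by the diagonal action -/

open Classical in
/-- The tensor with `X i` in position `ι i` for all `i` and `1` in the other positions; it is
`0` by convention if the positions are not distinct. -/
def place {j : ℕ} (ι : Fin j → Fin m) (X : Fin j → Matrix N N ℚ) :
    Matrix (Fin m → N) (Fin m → N) ℚ :=
  if Function.Injective ι then tensor (Function.extend ι X 1) else 0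

/-- The symmetrization of `X 0 ⊗ ⋯ ⊗ X (j - 1) ⊗ 1 ⊗ ⋯ ⊗ 1`. -/
def symT (m : ℕ) {j : ℕ} (X : Fin j → Matrix N N ℚ) : Matrix (Fin m → N) (Fin m → N) ℚ :=
  ∑ ι : Fin j → Fin m, place ι X

lemma atPos_mul_place_of_mem {j : ℕ} {ι : Fin j → Fin m} (hι : Function.Injective ι)
    (X : Fin j → Matrix N N ℚ) (Y : Matrix N N ℚ) (i : Fin j) :
    atPos (ι i) Y * place ι X = place ι (Function.update X i (Y * X i)) := by
  rw [place, place, if_pos hι, if_pos hι, atPos, ← tensor_mul]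
  congr 1
  funext k
  rw [Pi.mul_apply]
  by_cases hk : ∃ i', ι i' = k
  · obtain ⟨i', rfl⟩ := hk
    rw [hι.extend_apply, hι.extend_apply]
    by_cases h : i' = i
    · subst h; simp
    · rw [Pi.mulSingle_eq_of_ne (hι.ne h), Function.update_of_ne h, one_mul]
  · rw [Function.extend_apply' _ _ _ hk, Function.extend_apply' _ _ _ hk,
      Pi.mulSingle_eq_of_ne (fun h => hk ⟨i, h.symm⟩)]
    simp

lemma atPos_mul_place_of_notMem {j : ℕ} {ι : Fin j → Fin m} (hι : Function.Injective ι)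
    (X : Fin j → Matrix N N ℚ) (Y : Matrix N N ℚ) {k : Fin m} (hk : k ∉ Set.range ι) :
    atPos k Y * place ι X =
      place (Fin.cons k ι : Fin (j+1) → Fin m) (Fin.cons Y X : Fin (j+1) → Matrix N N ℚ) := by
  have hι' : Function.Injective (Fin.cons k ι : Fin (j+1) → Fin m) :=
    Fin.cons_injective_iff.mpr ⟨hk, hι⟩
  rw [place, place, if_pos hι, if_pos hι', atPos, ← tensor_mul]
  congr 1
  funext l
  rw [Pi.mul_apply]
  by_cases hl : ∃ i, ι i = l
  · obtain ⟨i, rfl⟩ := hl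
    have h1 := hι'.extend_apply (Fin.cons Y X : Fin (j+1) → Matrix N N ℚ) 1 i.succ
    simp only [Fin.cons_succ] at h1
    rw [h1, hι.extend_apply, Pi.mulSingle_eq_of_ne (fun h => hk ⟨i, h⟩), one_mul]
  · rw [Function.extend_apply' _ _ _ hl]
    by_cases hlk : l = k
    · subst hlk
      have h1 := hι'.extend_apply (Fin.cons Y X : Fin (j+1) → Matrix N N ℚ) 1 0
      simp only [Fin.cons_zero] at h1
      rw [h1]; simp
    · rw [Function.extend_apply', Pi.mulSingle_eq_of_ne hlk]
      · simp
      · rintro ⟨i, hi⟩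
        induction i using Fin.cases with
        | zero => exact hlk (by simpa using hi.symm)
        | succ i => exact hl ⟨i, by simpa using hi⟩

lemma dia_mul_place {j : ℕ} (ι : Fin j → Fin m) (X : Fin j → Matrix N N ℚ) (Y : Matrix N N ℚ) :
    dia Y * place ι X = ∑ k, place (Fin.cons k ι : Fin (j+1) → Fin m)
        (Fin.cons Y X : Fin (j+1) → Matrix N N ℚ) +
      ∑ i, place ι (Function.update X i (Y * X i)) := by
  classical
  by_cases hι : Function.Injective ι
  · have h1 : ∀ k, atPos k Y * place ι X = place (Fin.cons k ι : Fin (j+1) → Fin m)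
        (Fin.cons Y X : Fin (j+1) → Matrix N N ℚ) +
          (if k ∈ Finset.univ.image ι then atPos k Y * place ι X else 0) := by
      intro k
      split_ifs with hk
      · have : ¬ Function.Injective (Fin.cons k ι : Fin (j+1) → Fin m) := fun h =>
          (Fin.cons_injective_iff.mp h).1 (by simpa using hk)
        rw [place.eq_def (Fin.cons k ι : Fin (j+1) → Fin m), if_neg this, zero_add]
      · rw [add_zero, atPos_mul_place_of_notMem hι]
        simpa using hk
    rw [dia_apply, Finset.sum_mul, Finset.sum_congr rfl fun k _ => h1 k, Finset.sum_add_distrib,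
      Finset.sum_ite_mem, Finset.univ_inter, Finset.sum_image fun a _ b _ h => hι h]
    congr 1
    exact Finset.sum_congr rfl fun i _ => atPos_mul_place_of_mem hι X Y i
  · have h1 : ∀ k, ¬ Function.Injective (Fin.cons k ι : Fin (j+1) → Fin m) := fun k h =>
      hι (Fin.cons_injective_iff.mp h).2
    simp [place, hι, h1]

lemma dia_mul_symT {j : ℕ} (X : Fin j → Matrix N N ℚ) (Y : Matrix N N ℚ) :
    dia Y * symT m X = symT m (Fin.cons Y X : Fin (j+1) → Matrix N N ℚ) +
      ∑ i, symT m (Function.update X i (Y * X i)) := by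
  have h1 : symT m (Fin.cons Y X : Fin (j+1) → Matrix N N ℚ) =
      ∑ ι : Fin j → Fin m, ∑ k, place (Fin.cons k ι : Fin (j+1) → Fin m)
        (Fin.cons Y X : Fin (j+1) → Matrix N N ℚ) := by
    rw [symT, ← (Fin.consEquiv fun _ => Fin m).sum_comp, Fintype.sum_prod_type,
      Finset.sum_comm]
    rfl
  rw [h1]
  simp only [symT]
  rw [Finset.sum_comm (s := Finset.univ (α := Fin j)), ← Finset.sum_add_distrib, Finset.mul_sum]
  exact Finset.sum_congr rfl fun ι _ => dia_mul_place ι X Y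

/-- If the diagonal action of a multiplicatively closed set of matrices lies in a subalgebra,
then so do all symmetrized tensors formed from that set. -/
lemma symT_mem (S : Subalgebra ℚ (Matrix (Fin m → N) (Fin m → N) ℚ))
    (P : Matrix N N ℚ → Prop) (hmul : ∀ X Y, P X → P Y → P (X * Y))
    (hdia : ∀ X, P X → dia X ∈ S) :
    ∀ (j : ℕ) (X : Fin j → Matrix N N ℚ), (∀ i, P (X i)) → symT m X ∈ S := by
  intro j
  induction j with
  | zero =>
    intro X _
    have h : ∀ ι : Fin 0 → Fin m, place ι X = 1 := fun ι => by
      rw [place, if_pos (Function.injective_of_subsingleton ι), ← tensor_one]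
      congr 1
      funext k
      exact Function.extend_apply' _ _ _ fun ⟨i, _⟩ => i.elim0
    rw [symT, Finset.sum_congr rfl fun ι _ => h ι]
    exact S.sum_mem fun _ _ => S.one_mem
  | succ j ih =>
    intro X hX
    have h1 := dia_mul_symT (m := m) (Fin.tail X) (X 0)
    rw [Fin.cons_self_tail] at h1
    rw [← sub_eq_iff_eq_add.mpr h1]
    refine S.sub_mem (S.mul_mem (hdia _ (hX 0)) (ih _ fun i => hX i.succ))
      (S.sum_mem fun i _ => ih _ fun i' => ?_)
    by_cases h : i' = i
    · subst h
      rw [Function.update_self]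
      exact hmul _ _ (hX 0) (hX _)
    · rw [Function.update_of_ne h]
      exact hX _

lemma symT_full (X : Fin m → Matrix N N ℚ) (g f : Fin m → N) :
    symT m X g f = ∑ σ : Equiv.Perm (Fin m), ∏ k, X k (g (σ k)) (f (σ k)) := by
  rw [symT, Matrix.sum_apply]
  symm
  refine Finset.sum_of_injOn (fun σ : Equiv.Perm (Fin m) => (σ : Fin m → Fin m))
    (fun σ _ τ _ h => DFunLike.coe_injective h) (fun _ _ => Finset.mem_coe.mpr (Finset.mem_univ _))
    (fun ι _ hι => ?_) (fun σ _ => ?_)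
  · rw [place, if_neg, Matrix.zero_apply]
    intro h
    exact hι ⟨Equiv.ofBijective ι (Finite.injective_iff_bijective.mp h), by simp, rfl⟩
  · rw [place, if_pos σ.injective, tensor_apply,
      ← Equiv.prod_comp σ fun k => Function.extend (σ : Fin m → Fin m) X 1 k (g k) (f k)]
    refine Finset.prod_congr rfl fun k _ => ?_
    rw [σ.injective.extend_apply]

end Tensor
end LeviDuality

namespace LeviDuality

/-! ### Specialization of operators at `q = 1` -/

section Spec

variable {r m : ℕ}

/-- The matrix entries of `B` are regular at `q = 1`, with values the entries of `b`. -/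
def RedOp (B : Module.End Kq (TP r m)) (b : Matrix (Fin m → Idx r) (Fin m → Idx r) ℚ) : Prop :=
  ∀ g f, Red (B (Mf f) g) (b g f)

namespace RedOp

variable {B B' : Module.End Kq (TP r m)} {b b' : Matrix (Fin m → Idx r) (Fin m → Idx r) ℚ}

lemma add (h : RedOp B b) (h' : RedOp B' b') : RedOp (B + B') (b + b') :=
  fun g f => (h g f).add (h' g f)

lemma mul (h : RedOp B b) (h' : RedOp B' b') : RedOp (B * B') (b * b') := by
  intro g f
  have h1 : (B * B') (Mf f) g = ∑ e, B (Mf e) g * B' (Mf f) e := by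
    rw [Module.End.mul_apply]
    conv_lhs => rw [eq_sum_Mf (B' (Mf f))]
    rw [map_sum, Finset.sum_apply]
    refine Finset.sum_congr rfl fun e _ => ?_
    rw [map_smul, Pi.smul_apply, smul_eq_mul, mul_comm]
  rw [h1, Matrix.mul_apply]
  exact Red.sum _ fun e _ => (h g e).mul (h' e f)

lemma smul {x : Kq} {y : ℚ} (hx : Red x y) (h : RedOp B b) : RedOp (x • B) (y • b) :=
  fun g f => hx.mul (h g f)

lemma one : RedOp (1 : Module.End Kq (TP r m)) 1 := by
  intro g f
  rw [Module.End.one_apply, Mf_apply, Matrix.one_apply]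
  exact Red.ite _ Red.one Red.zero

lemma sum {α : Type*} (s : Finset α) {B : α → Module.End Kq (TP r m)}
    {b : α → Matrix (Fin m → Idx r) (Fin m → Idx r) ℚ} (h : ∀ i ∈ s, RedOp (B i) (b i)) :
    RedOp (∑ i ∈ s, B i) (∑ i ∈ s, b i) := by
  intro g f
  rw [LinearMap.sum_apply, Finset.sum_apply, Matrix.sum_apply]
  exact Red.sum s fun i hi => h i hi g f

lemma unique (h : RedOp B b) (h' : RedOp B b') : b = b' := by
  ext g f
  exact (h g f).unique (h' g f)

end RedOp

/-- The specializations at `q = 1` of the operators in `Φ(L_q^ı)`. -/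
def Phi1 (r m : ℕ) : Subalgebra ℚ (Matrix (Fin m → Idx r) (Fin m → Idx r) ℚ) where
  carrier := {b | ∃ B ∈ PhiL r m, RedOp B b}
  mul_mem' := by
    rintro b b' ⟨B, hB, h⟩ ⟨B', hB', h'⟩
    exact ⟨B * B', mul_mem hB hB', h.mul h'⟩
  add_mem' := by
    rintro b b' ⟨B, hB, h⟩ ⟨B', hB', h'⟩
    exact ⟨B + B', add_mem hB hB', h.add h'⟩
  algebraMap_mem' c := by
    refine ⟨algebraMap ℚ Kq c • 1, (PhiL r m).smul_mem (one_mem _) _, ?_⟩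
    have h := RedOp.one (r := r) (m := m) |>.smul (Red.const c)
    rwa [← Algebra.algebraMap_eq_smul_one (A := Matrix (Fin m → Idx r) (Fin m → Idx r) ℚ)] at h

/-- The specialization at `q = 1` of an endomorphism of `V̄`. -/
def RedE (A : Module.End Kq (Vb r)) (a : Matrix (Idx r) (Idx r) ℚ) : Prop :=
  ∀ x y, Red (A (Pi.single y 1) x) (a x y)

lemma tensorOp_apply_Mf (A : Fin m → Module.End Kq (Vb r)) (g f : Fin m → Idx r) :
    tensorOp r m A (Mf f) g = ∏ k, A k (Pi.single (f k) 1) (g k) := by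
  simp [tensorOp, matOp, Mf_apply]

lemma redOp_tensorOp {A : Fin m → Module.End Kq (Vb r)} {a : Fin m → Matrix (Idx r) (Idx r) ℚ}
    (h : ∀ k, RedE (A k) (a k)) : RedOp (tensorOp r m A) (tensor a) := by
  intro g f
  rw [tensorOp_apply_Mf, tensor_apply]
  exact Red.prod _ fun k _ => h k _ _

lemma redE_one : RedE (1 : Module.End Kq (Vb r)) 1 := by
  intro x y
  rw [Module.End.one_apply, Pi.single_apply, Matrix.one_apply]
  exact Red.ite _ Red.one Red.zero

lemma redE_diag (c : Idx r → Kq) (hc : ∀ x, Red (c x) 1) : RedE (diagMove r c id) 1 := by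
  intro x y
  simp only [diagMove, LinearMap.coe_mk, AddHom.coe_mk, id, Pi.single_apply, Matrix.one_apply,
    mul_ite, mul_one, mul_zero]
  exact Red.ite _ (hc x) Red.zero

lemma red_kap (a : Fin (2*r+3)) (x : Idx r) : Red (kap a x) 1 := by
  unfold kap
  split_ifs
  exacts [Red.q, Red.qinv, Red.one]

lemma red_kapi (a : Fin (2*r+3)) (x : Idx r) : Red (kapi a x) 1 := by
  unfold kapi
  split_ifs
  exacts [Red.qinv, Red.q, Red.one]

lemma redE_opE (a : Fin (2*r+3)) : RedE (opE r a) (Matrix.single (loI a) (hiI a) 1) := by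
  intro x y
  have h : (opE r a) (Pi.single y 1) x =
      if x = loI a ∧ y = hiI a then 1 else 0 := by
    simp only [opE, diagMove, LinearMap.coe_mk, AddHom.coe_mk, Pi.single_apply]
    split_ifs <;> simp_all
  rw [h, Matrix.single_apply]
  simp only [eq_comm (a := loI a), eq_comm (a := hiI a)]
  exact Red.ite _ Red.one Red.zero

lemma redE_opF (a : Fin (2*r+3)) : RedE (opF r a) (Matrix.single (hiI a) (loI a) 1) := by
  intro x y
  have h : (opF r a) (Pi.single y 1) x =
      if x = hiI a ∧ y = loI a then 1 else 0 := by
    simp only [opF, diagMove, LinearMap.coe_mk, AddHom.coe_mk, Pi.single_apply]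
    split_ifs <;> simp_all
  rw [h, Matrix.single_apply]
  simp only [eq_comm (a := loI a), eq_comm (a := hiI a)]
  exact Red.ite _ Red.one Red.zero

lemma redOp_opKKinv (a : Fin (2*r+3)) : RedOp (opKKinv r m a) 1 := by
  rw [← tensor_one]
  exact redOp_tensorOp fun k => redE_diag _ (red_kapi a)

lemma redOp_opEE (a : Fin (2*r+3)) :
    RedOp (opEE r m a) (dia (Matrix.single (loI a) (hiI a) 1)) := by
  rw [dia_apply]
  refine RedOp.sum _ fun j _ => redOp_tensorOp fun k => ?_
  by_cases h2 : k = j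
  · subst h2
    simpa using redE_opE a
  · rw [Pi.mulSingle_eq_of_ne h2, if_neg h2]
    split_ifs
    exacts [redE_one, redE_diag _ (red_kapi a)]

lemma redOp_opFF (a : Fin (2*r+3)) :
    RedOp (opFF r m a) (dia (Matrix.single (hiI a) (loI a) 1)) := by
  rw [dia_apply]
  refine RedOp.sum _ fun j _ => redOp_tensorOp fun k => ?_
  by_cases h2 : k = j
  · subst h2
    simpa using redE_opF a
  · rw [Pi.mulSingle_eq_of_ne h2, if_neg h2]
    split_ifs
    exacts [redE_diag _ (red_kap a), redE_one]

/-- The matrix `E_{ab} + E_{-a,-b}`, invariant under the flip `η_j ↦ η_{-j}`. -/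
def sy (a b : Idx r) : Matrix (Idx r) (Idx r) ℚ :=
  Matrix.single a b 1 + Matrix.single a.rev b.rev 1

lemma rev_ne (a : Idx r) : a.rev ≠ a := by
  rw [ne_eq, Fin.ext_iff, Fin.val_rev]; omega

lemma sy_rev (a b : Idx r) : sy a.rev b.rev = sy a b := by
  rw [sy, sy, Fin.rev_rev, Fin.rev_rev, add_comm]

lemma sy_mul (a b d : Idx r) : sy a b * sy b d = sy a d := by
  have h1 := rev_ne b
  have h2 := (rev_ne b).symm
  simp [sy, add_mul, mul_add, h1, h2]

lemma sy_mul_rev (a b d : Idx r) : sy a b * sy b.rev d = sy a d.rev := by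
  conv_lhs => rw [← Fin.rev_rev d, sy_rev]
  exact sy_mul _ _ _

lemma sy_mul_of_ne (a b c d : Idx r) (h : b ≠ c) (h' : b.rev ≠ c) : sy a b * sy c d = 0 := by
  have h1 : b ≠ c.rev := fun h1 => h' (by rw [h1, Fin.rev_rev])
  simp [sy, add_mul, mul_add, h, h', h1]

lemma sum_sy : ∑ a : Idx r, sy a a = 2 • (1 : Matrix (Idx r) (Idx r) ℚ) := by
  have h : ∑ a : Idx r, Matrix.single a a (1 : ℚ) = 1 := by
    ext x y
    simp only [Matrix.sum_apply, Matrix.single_apply, Matrix.one_apply]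
    by_cases hxy : x = y
    · subst hxy; simp
    · rw [if_neg hxy]
      exact Finset.sum_eq_zero fun a _ => if_neg fun h' => hxy (h'.1.symm.trans h'.2)
  simp only [sy, Finset.sum_add_distrib, h]
  have h2 := Equiv.sum_comp Fin.revPerm fun a : Idx r => Matrix.single a a (1 : ℚ)
  simp only [Fin.revPerm_apply] at h2
  rw [h2, h, two_smul]

/-- The matrices whose diagonal action is a specialization of an operator in `Φ(L_q^ı)`. -/
def lie1 (r m : ℕ) : Submodule ℚ (Matrix (Idx r) (Idx r) ℚ) :=
  (Subalgebra.toSubmodule (Phi1 r m)).comap dia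

lemma mem_lie1 {X : Matrix (Idx r) (Idx r) ℚ} : X ∈ lie1 r m ↔ dia X ∈ Phi1 r m := Iff.rfl

lemma bracket_mem {X Y : Matrix (Idx r) (Idx r) ℚ} (hX : X ∈ lie1 r m) (hY : Y ∈ lie1 r m) :
    X * Y - Y * X ∈ lie1 r m := by
  rw [mem_lie1] at *
  rw [dia_bracket]
  exact sub_mem (mul_mem hX hY) (mul_mem hY hX)

lemma one_mem_lie1 : (1 : Matrix (Idx r) (Idx r) ℚ) ∈ lie1 r m := by
  rw [mem_lie1, dia_one]
  exact (Phi1 r m).smul_mem (one_mem _) _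

lemma mem_PhiL {B : Module.End Kq (TP r m)} (hB : B ∈ LeviSet r m) : B ∈ PhiL r m :=
  Algebra.subset_adjoin hB

lemma sy_lo_hi (a : Fin (2*r+3)) : sy (loI a) (hiI a) =
    Matrix.single (loI a) (hiI a) 1 + Matrix.single (hiI a.rev) (loI a.rev) 1 := by
  have h1 : hiI a.rev = (loI a).rev := by
    simp only [loI, hiI, Fin.ext_iff, Fin.val_rev]; omega
  have h2 : loI a.rev = (hiI a).rev := by
    simp only [loI, hiI, Fin.ext_iff, Fin.val_rev]; omega
  rw [sy, h1, h2]

/-- These come from the specializations of the `ℬ_i`; that of `ℬ_0` exceeds the diagonal action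
of `E_{lo,hi} + E_{hi,lo}` by the identity, which comes from the term `𝕂_0⁻¹`. -/
lemma sy_lo_hi_mem (a : Fin (2*r+3)) (h0 : 0 < (a : ℕ)) (h1 : (a : ℕ) < 2*r+2) :
    sy (loI a) (hiI a) ∈ lie1 r m := by
  rw [mem_lie1, sy_lo_hi, map_add]
  by_cases ha : a = midI r
  · have hrev : a.rev = a := by
      subst ha
      simp only [midI, Fin.ext_iff, Fin.val_rev]; omega
    have h2 : RedOp (opB0 r m) (dia (Matrix.single (loI a) (hiI a) 1) +
        (1 : ℚ) • (dia (Matrix.single (hiI a) (loI a) 1) * 1) + 1) := by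
      rw [ha]
      exact ((redOp_opEE _).add (((redOp_opFF _).mul (redOp_opKKinv _)).smul Red.q)).add
        (redOp_opKKinv _)
    have h3 : _ ∈ Phi1 r m := ⟨_, mem_PhiL (Or.inl (Or.inl (Or.inl rfl))), h2⟩
    have h4 := sub_mem h3 (one_mem (Phi1 r m))
    rw [add_sub_cancel_right, mul_one, one_smul] at h4
    rw [hrev]
    exact h4
  · have h2 : RedOp (opB r m a) (dia (Matrix.single (loI a) (hiI a) 1) +
        dia (Matrix.single (hiI a.rev) (loI a.rev) 1) * 1) :=
      (redOp_opEE _).add ((redOp_opFF _).mul (redOp_opKKinv _))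
    rw [mul_one] at h2
    exact ⟨_, mem_PhiL (Or.inl (Or.inl (Or.inr ⟨a, ⟨ha, h0, h1⟩, rfl⟩))), h2⟩

/-- The highest index in `𝕀(2r+2)`. -/
def penI (r : ℕ) : Idx r := ⟨2*r+2, by omega⟩

lemma opKK_mul_opKKinv_entry (a : Fin (2*r+3)) (g f : Fin m → Idx r) :
    (opKK r m a * opKKinv r m a.rev) (Mf f) g =
      if g = f then ∏ k, kap a (g k) * kapi a.rev (g k) else 0 := by
  rw [opKK_eq, opKKinv_eq, mono_mul_diag, mono_apply, Mf_apply]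
  simp only [id, mul_ite, mul_one, mul_zero]

/-- The specialization of `(𝕜_{r+1} - 1) / (q - 1)`. -/
lemma sy_pen_sub_mem : sy (penI r) (penI r) - sy (topI r) (topI r) ∈ lie1 r m := by
  let a : Fin (2*r+3) := ⟨2*r+2, by omega⟩
  let y : Idx r → ℚ := fun x =>
    if x = penI r ∨ x = (penI r).rev then 1 else if x = topI r ∨ x = botI r then -1 else 0
  have hy : sy (penI r) (penI r) - sy (topI r) (topI r) = Matrix.diagonal y := by
    ext u v
    have h1 : (topI r).rev = botI r := by simp [topI, botI, Fin.ext_iff, Fin.val_rev]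
    have h2 : penI r ≠ topI r := by simp [topI, penI]
    have h3 : penI r ≠ botI r := by simp [botI, penI]
    have h4 : (penI r).rev ≠ topI r := by
      simp only [topI, penI, ne_eq, Fin.ext_iff, Fin.val_rev]; omega
    have h5 : (penI r).rev ≠ botI r := by
      simp only [botI, penI, ne_eq, Fin.ext_iff, Fin.val_rev]; omega
    have h6 : topI r ≠ botI r := by simp [topI, botI]
    have h7 : penI r ≠ (penI r).rev := (rev_ne _).symm
    simp only [sy, Matrix.sub_apply, Matrix.add_apply, Matrix.single_apply, h1,
      Matrix.diagonal_apply, y]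
    grind
  rw [mem_lie1, hy]
  refine ⟨(qv - 1)⁻¹ • (opkk r m a - 1), ?_, ?_⟩
  · exact (PhiL r m).smul_mem (sub_mem (mem_PhiL (Or.inl (Or.inr ⟨a, rfl⟩))) (one_mem _)) _
  · intro g f
    rw [dia_diagonal]
    have h1 : ((qv - 1)⁻¹ • (opkk r m a - 1)) (Mf f) g =
        if g = f then (∏ k, kap a (g k) * kapi a.rev (g k) - 1) * (qv - 1)⁻¹ else 0 := by
      rw [LinearMap.smul_apply, Pi.smul_apply, LinearMap.sub_apply, Pi.sub_apply, opkk,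
        opKK_mul_opKKinv_entry, Module.End.one_apply, Mf_apply, smul_eq_mul, mul_comm]
      split_ifs <;> simp
    rw [h1]
    refine Red.ite _ (Red.quot_prod _ (fun k _ => ?_) fun k _ => ?_) Red.zero
    · simpa using (red_kap a (g k)).mul (red_kapi a.rev (g k))
    · generalize g k = x
      have hq1 := qv_sub_one_ne_zero
      have hq0 := qv_ne_zero
      have e1 : loI a = penI r := rfl
      have e2 : hiI a = topI r := rfl
      have e3 : loI a.rev = botI r := by
        simp [a, loI, botI, Fin.val_rev]
      have e4 : hiI a.rev = (penI r).rev := by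
        simp only [a, hiI, penI, Fin.ext_iff, Fin.val_rev]; omega
      have h2 : penI r ≠ topI r := by simp [topI, penI]
      have h3 : penI r ≠ botI r := by simp [botI, penI]
      have h4 : (penI r).rev ≠ topI r := by
        simp only [topI, penI, ne_eq, Fin.ext_iff, Fin.val_rev]; omega
      have h5 : (penI r).rev ≠ botI r := by
        simp only [botI, penI, ne_eq, Fin.ext_iff, Fin.val_rev]; omega
      have h6 : topI r ≠ botI r := by simp [topI, botI]
      have h7 : penI r ≠ (penI r).rev := (rev_ne _).symm
      have hA : (qv - 1) * (qv - 1)⁻¹ = 1 := mul_inv_cancel₀ hq1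
      have hB : (qv⁻¹ - 1) * (qv - 1)⁻¹ = -qv⁻¹ := by
        field_simp
        ring
      have hval : (kap a x * kapi a.rev x - 1) * (qv - 1)⁻¹ =
          if x = penI r ∨ x = (penI r).rev then 1
          else if x = topI r ∨ x = botI r then -qv⁻¹ else 0 := by
        simp only [kap, kapi, e1, e2, e3, e4]
        grind
      rw [hval]
      exact Red.ite _ Red.one (Red.ite _ Red.qinv.neg Red.zero)

lemma innerI_iff {a : Idx r} : innerI r a ↔ 0 < (a : ℕ) ∧ (a : ℕ) < 2*r+3 := by
  simp only [innerI, botI, topI, ne_eq, Fin.ext_iff]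
  omega

/-- The matrices `E_{ac} + E_{-a,-c}` with `a < c` in `𝕀(2r+2)` arise from the simple ones by
taking brackets. -/
lemma sy_mem_of_lt (n : ℕ) : ∀ a c : Idx r, 0 < (a : ℕ) → (c : ℕ) < 2*r+3 →
    (c : ℕ) = a + n + 1 → sy a c ∈ lie1 r m := by
  induction n using Nat.strong_induction_on with
  | _ n ih =>
    intro a c ha hc hac
    rcases Nat.eq_zero_or_pos n with rfl | hn
    · have h := sy_lo_hi_mem (r := r) (m := m) ⟨a, by omega⟩ ha (by simp only; omega)
      have hc' : c = hiI ⟨a, by omega⟩ := Fin.ext hac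
      rw [hc']
      exact h
    · by_cases hca : c = a.rev
      · have hcv : (c : ℕ) = 2*r+3 - a := by rw [hca, Fin.val_rev]; omega
        -- As `a + c` is odd, `n` is even, and `-b` lies strictly to the right of `b`.
        -- The bracket has an extra term, which is known by induction.
        let b : Idx r := ⟨a + 1, by omega⟩
        have hbv : (b : ℕ) = a + 1 := rfl
        have hbr : (b.rev : ℕ) = 2*r+3 - b := by rw [Fin.val_rev]; omega
        have h1 := ih 0 hn a b ha (by omega) (by omega)
        have h2 := ih (n-1) (by omega) b c (by omega) hc (by omega)
        have h3 := ih (n-2) (by omega) b b.rev (by omega) (by omega) (by omega)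
        have h4 : sy a b * sy b c - sy b c * sy a b = sy a c - sy b b.rev := by
          rw [sy_mul]
          congr 1
          rw [show a = c.rev by rw [hca, Fin.rev_rev], sy_mul_rev]
        have h5 := add_mem (bracket_mem h1 h2) h3
        rwa [h4, sub_add_cancel] at h5
      · let b : Idx r := ⟨a + n, by omega⟩
        have hbv : (b : ℕ) = a + n := rfl
        have h1 := ih (n-1) (by omega) a b ha (by omega) (by omega)
        have h2 := ih 0 hn b c (by omega) hc (by omega)
        have h5 := bracket_mem h1 h2
        rwa [sy_mul, sy_mul_of_ne b c a b, sub_zero] at h5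
        · intro h; rw [h] at hac; omega
        · intro h; exact hca (by rw [← h, Fin.rev_rev])

lemma sy_mem_of_ne {a c : Idx r} (ha : innerI r a) (hc : innerI r c) (hac : a ≠ c) :
    sy a c ∈ lie1 r m := by
  rw [innerI_iff] at ha hc
  rcases lt_or_gt_of_ne hac with h | h <;> rw [Fin.lt_def] at h
  · exact sy_mem_of_lt (c - a - 1) a c ha.1 hc.2 (by omega)
  · rw [← sy_rev]
    have h1 : (a.rev : ℕ) = 2*r+3 - a := by rw [Fin.val_rev]; omega
    have h2 : (c.rev : ℕ) = 2*r+3 - c := by rw [Fin.val_rev]; omega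
    exact sy_mem_of_lt (a - c - 1) a.rev c.rev (by omega) (by omega) (by omega)

lemma sy_sub_mem {a c : Idx r} (ha : innerI r a) (hc : innerI r c) :
    sy a a - sy c c ∈ lie1 r m := by
  by_cases hac : a = c
  · rw [hac, sub_self]
    exact zero_mem _
  · have h := bracket_mem (sy_mem_of_ne (m := m) ha hc hac) (sy_mem_of_ne hc ha (Ne.symm hac))
    rwa [sy_mul, sy_mul] at h

lemma innerI_pen : innerI r (penI r) := by
  rw [innerI_iff, penI]
  simp

lemma sy_diag_sub_mem (a : Idx r) : sy a a - sy (penI r) (penI r) ∈ lie1 r m := by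
  by_cases ha : innerI r a
  · exact sy_sub_mem ha innerI_pen
  · have h : sy a a = sy (topI r) (topI r) := by
      by_cases h : a = topI r
      · rw [h]
      · have h1 : a = (topI r).rev := by
          by_contra h2
          refine ha ⟨fun h3 => h2 ?_, h⟩
          rw [h3]
          simp [topI, botI, Fin.ext_iff, Fin.val_rev]
        rw [h1, sy_rev]
    rw [h, ← neg_sub]
    exact neg_mem sy_pen_sub_mem

/-- The identity matrix separates the diagonal matrices that are only known up to differences. -/
lemma sy_diag_mem (a : Idx r) : sy a a ∈ lie1 r m := by
  have h1 : ∑ a : Idx r, (sy a a - sy (penI r) (penI r)) ∈ lie1 r m :=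
    sum_mem fun a _ => sy_diag_sub_mem a
  rw [Finset.sum_sub_distrib, sum_sy, Finset.sum_const, Finset.card_univ, Fintype.card_fin] at h1
  have h2 := sub_mem (nsmul_mem (one_mem_lie1 (r := r) (m := m)) 2) h1
  rw [sub_sub_cancel, ← Nat.cast_smul_eq_nsmul ℚ] at h2
  have h3 := (lie1 r m).smul_mem ((2*r+4 : ℕ) : ℚ)⁻¹ h2
  rw [smul_smul, inv_mul_cancel₀ (by positivity), one_smul] at h3
  have h4 := add_mem (sy_diag_sub_mem (m := m) a) h3
  rwa [sub_add_cancel] at h4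

/-- Matrices invariant under the flip and preserving both `V` and the lines spanned by
`η_{±(r+3/2)}`. -/
def Blk (X : Matrix (Idx r) (Idx r) ℚ) : Prop :=
  (∀ a b, X a.rev b.rev = X a b) ∧
    ∀ a b, X a b ≠ 0 → a = b ∨ (innerI r a ∧ innerI r b)

lemma Blk.mul {X Y : Matrix (Idx r) (Idx r) ℚ} (hX : Blk X) (hY : Blk Y) : Blk (X * Y) := by
  refine ⟨fun a b => ?_, fun a b hab => ?_⟩
  · rw [Matrix.mul_apply, Matrix.mul_apply, ← Equiv.sum_comp Fin.revPerm]
    refine Finset.sum_congr rfl fun c _ => ?_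
    rw [Fin.revPerm_apply, hX.1, hY.1]
  · rw [Matrix.mul_apply] at hab
    obtain ⟨c, -, hc⟩ := Finset.exists_ne_zero_of_sum_ne_zero hab
    rcases hX.2 a c (left_ne_zero_of_mul hc) with rfl | h1
    · exact hY.2 _ _ (right_ne_zero_of_mul hc)
    · rcases hY.2 c b (right_ne_zero_of_mul hc) with rfl | h2
      · exact Or.inr h1
      · exact Or.inr ⟨h1.1, h2.2⟩

lemma innerI_rev {a : Idx r} : innerI r a.rev ↔ innerI r a := by
  rw [innerI_iff, innerI_iff, Fin.val_rev]
  omega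

lemma blk_sy {a b : Idx r} (h : a = b ∨ (innerI r a ∧ innerI r b)) : Blk (sy a b) := by
  refine ⟨fun x y => ?_, fun x y hxy => ?_⟩
  · have h1 : ∀ u v : Idx r, u = v.rev ↔ u.rev = v := fun u v => by
      rw [Fin.rev_eq_iff]
    simp only [sy, Matrix.add_apply, Matrix.single_apply, h1, Fin.rev_rev]
    exact add_comm _ _
  · simp only [sy, Matrix.add_apply, Matrix.single_apply] at hxy
    by_cases h1 : a = x ∧ b = y
    · rw [← h1.1, ← h1.2]
      exact h
    · by_cases h2 : a.rev = x ∧ b.rev = y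
      · rw [← h2.1, ← h2.2, innerI_rev, innerI_rev, Fin.rev_inj]
        exact h
      · simp [h1, h2] at hxy

/-- At `q = 1`, the Lie algebra of specializations contains the whole of `Blk`. -/
lemma Blk.mem {X : Matrix (Idx r) (Idx r) ℚ} (hX : Blk X) : X ∈ lie1 r m := by
  have h : X = (2 : ℚ)⁻¹ • ∑ a, ∑ b, X a b • sy a b := by
    have h1 : ∑ a, ∑ b, X a b • Matrix.single a b (1 : ℚ) = X := by
      conv_rhs => rw [Matrix.matrix_eq_sum_single X]
      simp [Matrix.smul_single]
    have h2 : ∑ a, ∑ b, X a b • Matrix.single a.rev b.rev (1 : ℚ) = X := by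
      conv_rhs => rw [← h1, ← Equiv.sum_comp Fin.revPerm]
      refine Finset.sum_congr rfl fun a _ => ?_
      rw [← Equiv.sum_comp Fin.revPerm fun b => X (Fin.revPerm a) b • _]
      exact Finset.sum_congr rfl fun b _ => by rw [Fin.revPerm_apply, Fin.revPerm_apply, hX.1]
    simp only [sy, smul_add, Finset.sum_add_distrib, h1, h2]
    rw [← add_smul]
    norm_num
  rw [h]
  refine (lie1 r m).smul_mem _ (sum_mem fun a _ => sum_mem fun b _ => ?_)
  by_cases hab : X a b = 0
  · rw [hab, zero_smul]
    exact zero_mem _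
  · refine (lie1 r m).smul_mem _ ?_
    by_cases h0 : a = b
    · subst h0
      exact sy_diag_mem a
    · have h1 := (hX.2 a b hab).resolve_left h0
      exact sy_mem_of_ne h1.1 h1.2 h0

/-- The symmetrized elementary tensors whose entries respect the decomposition of `V̄`. -/
lemma symT_sy_mem {u v : Fin m → Idx r} (h : ∀ k, u k = v k ∨ (innerI r (u k) ∧ innerI r (v k))) :
    symT m (fun k => sy (u k) (v k)) ∈ Phi1 r m :=
  symT_mem (Phi1 r m) Blk (fun _ _ hX hY => hX.mul hY) (fun _ hX => mem_lie1.mp hX.mem) m _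
    fun k => blk_sy (h k)

end Spec
end LeviDuality

namespace LeviDuality

/-! ### The commutant at `q = 1` -/

section Commutant

variable {r m : ℕ}

/-- Replacement of the `k`-th index by its negative. -/
def flipAt (k : Fin m) (g : Fin m → Idx r) : Fin m → Idx r :=
  Function.update g k (g k).rev

lemma flipAt_flipAt (k : Fin m) (g : Fin m → Idx r) : flipAt k (flipAt k g) = g := by
  simp [flipAt]

/-- The matrix of the operator `v ↦ v ∘ τ`. -/
def permM (τ : (Fin m → Idx r) → (Fin m → Idx r)) :
    Matrix (Fin m → Idx r) (Fin m → Idx r) ℚ :=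
  fun g f => if τ g = f then 1 else 0

lemma red_hecke : Red (qv⁻¹ - qv) 0 := by
  simpa using Red.qinv.sub Red.q

lemma redOp_R0op (h : 0 < m) : RedOp (R0op r m) (permM (flipAt ⟨0, h⟩)) := by
  intro g f
  rw [R0op_apply h, Mf_apply, Mf_apply, permM]
  have h1 := (Red.ite (flipAt ⟨0, h⟩ g = f) Red.one Red.zero).add
    (Red.ite (g ⟨0, h⟩ < (g ⟨0, h⟩).rev)
      (red_hecke.mul (Red.ite (g = f) Red.one Red.zero)) Red.zero)
  simp only [zero_mul, ite_self, add_zero] at h1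
  exact h1

lemma redOp_Rsw {p : ℕ} (h : p + 1 < m) :
    RedOp (Rsw r m p) (permM fun g => g ∘ Equiv.swap ⟨p, by omega⟩ ⟨p+1, h⟩) := by
  intro g f
  rw [Rsw_apply h, Mf_apply, Mf_apply, permM]
  by_cases hg : g ⟨p, by omega⟩ = g ⟨p+1, h⟩
  · have h2 : g ∘ Equiv.swap ⟨p, by omega⟩ ⟨p+1, h⟩ = g := by
      funext k
      rw [Function.comp_apply, Equiv.swap_apply_def]
      split_ifs with h3 h4
      · rw [h3, hg]
      · rw [h4, hg]
      · rfl
    rw [if_pos hg, h2]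
    simpa only [one_mul] using Red.qinv.mul (Red.ite (g = f) Red.one Red.zero)
  · rw [if_neg hg]
    have h1 := (Red.ite (g ∘ Equiv.swap ⟨p, by omega⟩ ⟨p+1, h⟩ = f) Red.one Red.zero).add
      (Red.ite (g ⟨p+1, h⟩ < g ⟨p, by omega⟩)
        (red_hecke.mul (Red.ite (g = f) Red.one Red.zero)) Red.zero)
    simpa only [zero_mul, ite_self, add_zero] using h1

lemma apply_of_commute_permM {A R : Module.End Kq (TP r m)}
    {z : Matrix (Fin m → Idx r) (Fin m → Idx r) ℚ} {τ : (Fin m → Idx r) → (Fin m → Idx r)}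
    (hA : RedOp A z) (hR : RedOp R (permM τ)) (hAR : R * A = A * R) (hτ : ∀ g, τ (τ g) = g)
    (g f : Fin m → Idx r) : z (τ g) (τ f) = z g f := by
  have h := (hR.mul hA).unique (hAR ▸ hA.mul hR)
  have h1 := congrFun (congrFun h g) (τ f)
  have hinj : ∀ e, τ e = τ f ↔ e = f := fun e =>
    ⟨fun h => by rw [← hτ e, h, hτ], fun h => by rw [h]⟩
  simpa [Matrix.mul_apply, permM, hinj] using h1

lemma goodF_iff_of_commute_proj {A : Module.End Kq (TP r m)}
    {z : Matrix (Fin m → Idx r) (Fin m → Idx r) ℚ} (hA : RedOp A z) {l : ℕ}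
    (hl : proj r m l * A = A * proj r m l) {g f : Fin m → Idx r} (hz : z g f ≠ 0) :
    goodF r m l g ↔ goodF r m l f := by
  classical
  have hp : RedOp (proj r m l) (Matrix.diagonal fun g => if goodF r m l g then 1 else 0) := by
    intro g f
    rw [proj_apply, Mf_apply, Matrix.diagonal_apply]
    have h1 := Red.ite (g = f) (Red.ite (goodF r m l g) Red.one Red.zero) Red.zero
    convert h1 using 1
    split_ifs <;> rfl
  have h := (hp.mul hA).unique (hl ▸ hA.mul hp)
  have h1 := congrFun (congrFun h g) f
  rw [Matrix.diagonal_mul, Matrix.mul_diagonal] at h1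
  split_ifs at h1 with h2 h3 h3
  · exact iff_of_true h2 h3
  · exact absurd (by simpa using h1) hz
  · exact absurd (by simpa using h1.symm) hz
  · exact iff_of_false h2 h3

/-- The action on indices of a signed permutation, an element of the Weyl group of type `B_m`. -/
def act (σ : Equiv.Perm (Fin m)) (ε : Fin m → Bool) (f : Fin m → Idx r) : Fin m → Idx r :=
  fun k => if ε k then (f (σ k)).rev else f (σ k)

/-- Invariance of a matrix under the simple reflections of type `B_m`. -/
structure Inv (z : Matrix (Fin m → Idx r) (Fin m → Idx r) ℚ) : Prop where
  flip : ∀ (h : 0 < m) (g f : Fin m → Idx r), z (flipAt ⟨0, h⟩ g) (flipAt ⟨0, h⟩ f) = z g f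
  swap : ∀ (p : ℕ) (h : p + 1 < m) (g f : Fin m → Idx r),
    z (g ∘ Equiv.swap ⟨p, by omega⟩ ⟨p+1, h⟩) (f ∘ Equiv.swap ⟨p, by omega⟩ ⟨p+1, h⟩) = z g f

namespace Inv

variable {z : Matrix (Fin m → Idx r) (Fin m → Idx r) ℚ}

lemma perm (hz : Inv z) (σ : Equiv.Perm (Fin m)) (g f : Fin m → Idx r) :
    z (g ∘ σ) (f ∘ σ) = z g f := by
  obtain _ | n := m
  · rw [Subsingleton.elim σ 1]
    rfl
  · have hσ : σ ∈ Submonoid.closure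
        (Set.range fun i : Fin n => Equiv.swap i.castSucc i.succ) := by
      rw [Equiv.Perm.mclosure_swap_castSucc_succ]
      trivial
    induction hσ using Submonoid.closure_induction generalizing g f with
    | mem s hs =>
      obtain ⟨i, rfl⟩ := hs
      exact hz.swap i (by omega) g f
    | one => rfl
    | mul σ σ' _ _ h h' =>
      rw [Equiv.Perm.coe_mul, ← Function.comp_assoc, ← Function.comp_assoc, h', h]

lemma flipAt (hz : Inv z) (k : Fin m) (g f : Fin m → Idx r) :
    z (flipAt k g) (flipAt k f) = z g f := by
  have h0 : 0 < m := k.pos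
  have h : ∀ e : Fin m → Idx r, LeviDuality.flipAt k e =
      LeviDuality.flipAt ⟨0, h0⟩ (e ∘ Equiv.swap ⟨0, h0⟩ k) ∘ Equiv.swap ⟨0, h0⟩ k := by
    intro e
    funext j
    simp only [LeviDuality.flipAt, Function.comp_apply, Function.update_apply,
      Equiv.swap_apply_left, Equiv.swap_apply_self]
    have h1 : Equiv.swap ⟨0, h0⟩ k j = ⟨0, h0⟩ ↔ j = k := by
      rw [← Equiv.eq_symm_apply, Equiv.symm_swap, Equiv.swap_apply_left]
    simp only [h1]
  rw [h g, h f, hz.perm, hz.flip h0, hz.perm]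

lemma act (hz : Inv z) (σ : Equiv.Perm (Fin m)) (ε : Fin m → Bool) (g f : Fin m → Idx r) :
    z (act σ ε g) (act σ ε f) = z g f := by
  have key : ∀ s : Finset (Fin m), ∀ g f : Fin m → Idx r,
      z (fun k => if k ∈ s then (g k).rev else g k) (fun k => if k ∈ s then (f k).rev else f k) =
        z g f := by
    intro s
    induction s using Finset.induction_on with
    | empty => intro g f; simp
    | insert a s ha ih =>
      intro g f
      have h : ∀ e : Fin m → Idx r, (fun k => if k ∈ insert a s then (e k).rev else e k) =
          LeviDuality.flipAt a (fun k => if k ∈ s then (e k).rev else e k) := by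
        intro e
        funext k
        by_cases hk : k = a
        · subst hk
          simp [LeviDuality.flipAt, ha]
        · simp [LeviDuality.flipAt, hk]
      rw [h, h, hz.flipAt, ih]
  have h2 := key (Finset.univ.filter fun k => ε k = true) (g ∘ σ) (f ∘ σ)
  rw [hz.perm] at h2
  simp only [Finset.mem_filter_univ] at h2
  exact h2

end Inv

lemma exists_goodF_act (v : Fin m → Idx r) :
    ∃ σ ε l, l ≤ m ∧ goodF r m l (act σ ε v) := by
  classical
  let key : Fin m → ℕ := fun k => if innerI r (v k) then 0 else 1
  let σ := Tuple.sort key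
  have hmono : Monotone (key ∘ σ) := Tuple.monotone_sort key
  have hdown : ∀ k k' : Fin m, k ≤ k' → innerI r (v (σ k')) → innerI r (v (σ k)) := by
    intro k k' hk h
    by_contra h1
    have h2 := hmono hk
    simp [key, h, h1] at h2
  have hex : ∃ l, ∀ k : Fin m, l ≤ (k : ℕ) → ¬ innerI r (v (σ k)) :=
    ⟨m, fun k hk => absurd k.2 (by omega)⟩
  refine ⟨σ, fun k => decide (v (σ k) = botI r), Nat.find hex,
    Nat.find_min' hex fun k hk => absurd k.2 (by omega), fun k => ⟨fun hk => ?_, fun hk => ?_⟩⟩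
  · have h1 := Nat.find_min hex hk
    push Not at h1
    obtain ⟨k', hk', h2⟩ := h1
    have h3 := hdown k k' hk' h2
    simp only [act]
    split_ifs
    · exact innerI_rev.mpr h3
    · exact h3
  · have h1 := Nat.find_spec hex k hk
    simp only [act, decide_eq_true_eq]
    split_ifs with h2
    · rw [h2]
      simp [topI, botI, Fin.ext_iff]
    · by_contra h3
      exact h1 ⟨h2, h3⟩

/-- The nonzero entries of the specialization of an operator in the commutant. The idempotents
only control the entries at indices in standard position, to which every index can be moved. -/
lemma support_of_inv {z : Matrix (Fin m → Idx r) (Fin m → Idx r) ℚ} (hz : Inv z)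
    (hgood : ∀ l ≤ m, ∀ g f, z g f ≠ 0 → (goodF r m l g ↔ goodF r m l f))
    {u v : Fin m → Idx r} (huv : z u v ≠ 0) (k : Fin m) :
    u k = v k ∨ (innerI r (u k) ∧ innerI r (v k)) := by
  obtain ⟨σ, ε, l, hl, hv⟩ := exists_goodF_act v
  have hu : goodF r m l (act σ ε u) :=
    (hgood l hl _ _ (by rwa [hz.act σ ε u v])).mpr hv
  obtain ⟨k, rfl⟩ := σ.surjective k
  have h1 := hu k
  have h2 := hv k
  simp only [act] at h1 h2
  by_cases hk : (k : ℕ) < l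
  · right
    have h3 := h1.1 hk
    have h4 := h2.1 hk
    split_ifs at h3 h4
    · exact ⟨innerI_rev.mp h3, innerI_rev.mp h4⟩
    · exact ⟨h3, h4⟩
  · left
    have h3 := (h1.2 (by omega)).trans (h2.2 (by omega)).symm
    split_ifs at h3
    · exact Fin.rev_injective h3
    · exact h3

lemma sy_apply_eq_sum (a b x y : Idx r) :
    sy a b x y = ∑ e : Bool,
      if a = (if e then x.rev else x) ∧ b = (if e then y.rev else y) then (1 : ℚ) else 0 := by
  simp only [sy, Matrix.add_apply, Matrix.single_apply, Fintype.sum_bool, if_true,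
    Bool.false_eq_true, if_false, Fin.rev_eq_iff]
  exact add_comm _ _

lemma symT_sy_apply (u v g f : Fin m → Idx r) :
    symT m (fun k => sy (u k) (v k)) g f =
      ∑ σ : Equiv.Perm (Fin m), ∑ ε : Fin m → Bool,
        if u = act σ ε g ∧ v = act σ ε f then (1 : ℚ) else 0 := by
  rw [symT_full]
  refine Finset.sum_congr rfl fun σ _ => ?_
  simp only [sy_apply_eq_sum]
  rw [Finset.prod_univ_sum, Fintype.piFinset_univ]
  refine Finset.sum_congr rfl fun ε _ => ?_
  by_cases h : u = act σ ε g ∧ v = act σ ε f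
  · rw [if_pos h]
    exact Finset.prod_eq_one fun k _ => if_pos ⟨congrFun h.1 k, congrFun h.2 k⟩
  · rw [if_neg h]
    simp only [funext_iff, ← forall_and, not_forall] at h
    obtain ⟨k, hk⟩ := h
    exact Finset.prod_eq_zero (Finset.mem_univ k) (if_neg hk)

/-- Averaging over the Weyl group of type `B_m`. -/
lemma sum_smul_symT {z : Matrix (Fin m → Idx r) (Fin m → Idx r) ℚ} (hz : Inv z) :
    ∑ u, ∑ v, z u v • symT m (fun k => sy (u k) (v k)) =
      (Fintype.card (Equiv.Perm (Fin m) × (Fin m → Bool)) : ℚ) • z := by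
  ext g f
  simp only [Matrix.sum_apply, Matrix.smul_apply, symT_sy_apply, smul_eq_mul]
  calc _ = ∑ u, ∑ v, ∑ w : Equiv.Perm (Fin m) × (Fin m → Bool),
          if u = act w.1 w.2 g ∧ v = act w.1 w.2 f then z u v else 0 := by
        refine Finset.sum_congr rfl fun u _ => Finset.sum_congr rfl fun v _ => ?_
        rw [← Fintype.sum_prod_type', Finset.mul_sum]
        simp only [mul_ite, mul_one, mul_zero]
    _ = ∑ w : Equiv.Perm (Fin m) × (Fin m → Bool), ∑ u, ∑ v,
          if u = act w.1 w.2 g ∧ v = act w.1 w.2 f then z u v else 0 := by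
        exact (Finset.sum_congr rfl fun u _ => Finset.sum_comm).trans Finset.sum_comm
    _ = ∑ w : Equiv.Perm (Fin m) × (Fin m → Bool), z g f := by
        refine Finset.sum_congr rfl fun w _ => ?_
        simp only [ite_and, Finset.sum_ite_irrel, Finset.sum_const_zero, Finset.sum_ite_eq',
          Finset.mem_univ, if_true]
        exact hz.act _ _ _ _
    _ = _ := by
        rw [Finset.sum_const, Finset.card_univ, nsmul_eq_mul]

/-- The matrix with entries `x` as an operator. -/
def ofEntries (r m : ℕ) :
    ((Fin m → Idx r) × (Fin m → Idx r) → Kq) →ₗ[Kq] Module.End Kq (TP r m) where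
  toFun x := matOp r m fun g f => x (g, f)
  map_add' x y := by
    refine LinearMap.ext fun v => ?_
    funext g
    simp [matOp, add_mul, Finset.sum_add_distrib]
  map_smul' s x := by
    refine LinearMap.ext fun v => ?_
    funext g
    simp [matOp, mul_assoc, Finset.mul_sum]

lemma ofEntries_apply_Mf (x : (Fin m → Idx r) × (Fin m → Idx r) → Kq) (g f : Fin m → Idx r) :
    ofEntries r m x (Mf f) g = x (g, f) := by
  simp [ofEntries, matOp, Mf_apply]

lemma ofEntries_entries (A : Module.End Kq (TP r m)) :
    ofEntries r m (fun p => A (Mf p.2) p.1) = A :=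
  end_ext fun f => by
    funext g
    rw [ofEntries_apply_Mf]

/-- The operators `Ψ(H_i)` and the idempotents `x_e^(l)`. -/
def dualSet (r m : ℕ) : Set (Module.End Kq (TP r m)) :=
  {R | ∃ i < m, R = RopN r m i} ∪ {R | ∃ l ≤ m, R = proj r m l}

lemma PhiL_le_centralizer : PhiL r m ≤ Subalgebra.centralizer Kq (dualSet r m) := by
  refine Algebra.adjoin_le fun B hB => ?_
  rw [SetLike.mem_coe, Subalgebra.mem_centralizer_iff]
  rintro R (⟨i, hi, rfl⟩ | ⟨l, -, rfl⟩)
  · exact (levi_commute_RopN hi hB).eq.symm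
  · exact (levi_commute_proj l hB).eq.symm

/-- The specialization of an operator in the commutant is the specialization of an operator in
`Φ(L_q^ı)`. -/
lemma mem_Phi1_of_centralizer {A : Module.End Kq (TP r m)}
    {z : Matrix (Fin m → Idx r) (Fin m → Idx r) ℚ}
    (hA : A ∈ Subalgebra.centralizer Kq (dualSet r m)) (hz : RedOp A z) : z ∈ Phi1 r m := by
  rw [Subalgebra.mem_centralizer_iff] at hA
  have hinv : Inv z :=
    { flip := fun h => apply_of_commute_permM hz (redOp_R0op h)
        (hA _ (Or.inl ⟨0, h, by rw [RopN, if_pos rfl]⟩)) (flipAt_flipAt _)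
      swap := fun p h => apply_of_commute_permM hz (redOp_Rsw h)
        (hA _ (Or.inl ⟨p + 1, h, by rw [RopN, if_neg (by omega)]; rfl⟩))
        fun g => by
          funext k
          simp }
  have hsupp := fun u v (huv : z u v ≠ 0) => support_of_inv hinv
    (fun l hl g f h => goodF_iff_of_commute_proj hz (hA _ (Or.inr ⟨l, hl, rfl⟩)) h) huv
  have hW : (Fintype.card (Equiv.Perm (Fin m) × (Fin m → Bool)) : ℚ) ≠ 0 :=
    Nat.cast_ne_zero.mpr Fintype.card_ne_zero
  have h := sum_smul_symT hinv
  rw [← inv_smul_eq_iff₀ hW] at h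
  rw [← h]
  refine (Phi1 r m).smul_mem (sum_mem fun u _ => sum_mem fun v _ => ?_) _
  by_cases huv : z u v = 0
  · rw [huv, zero_smul]
    exact zero_mem _
  · exact (Phi1 r m).smul_mem (symT_sy_mem (hsupp u v huv)) _

/-- The double centralizer property, in the form needed here. -/
lemma centralizer_le_PhiL : Subalgebra.centralizer Kq (dualSet r m) ≤ PhiL r m := by
  have h := le_of_red
    ((Subalgebra.toSubmodule (PhiL r m)).comap (ofEntries r m))
    ((Subalgebra.toSubmodule (Subalgebra.centralizer Kq (dualSet r m))).comap (ofEntries r m))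
    (fun x hx => PhiL_le_centralizer hx)
    (fun p hp => by
      have hz : RedOp (ofEntries r m fun i => algebraMap _ Kq (p i))
          (fun g f => (p (g, f)).eval 1) := by
        intro g f
        rw [ofEntries_apply_Mf]
        exact Red.poly _
      obtain ⟨B, hB, hBz⟩ := mem_Phi1_of_centralizer hp hz
      refine ⟨fun i => B (Mf i.2) i.1, ?_, fun i => hBz i.1 i.2⟩
      rw [Submodule.mem_comap, ofEntries_entries]
      exact hB)
  intro A hA
  have h1 := @h (fun i => A (Mf i.2) i.1)
    (by rw [Submodule.mem_comap, ofEntries_entries]; exact hA)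
  rw [Submodule.mem_comap, ofEntries_entries] at h1
  exact h1

end Commutant
end LeviDuality

/-- **Step (b) in the proof of Theorem 3.5.** If `A ∈ End_K(V̄^⊗m)` commutes with `Ξ(h)`
for every `h ∈ 𝓗_m`, then for each `0 ≤ l ≤ m` there is an operator `B ∈ Φ(L_q^ı)` that
agrees with `A` on the subspace `V̄_l`. -/
theorem commutant_agrees_with_levi_on_level (r m : ℕ) (hr : 1 ≤ r) (hm : 2 ≤ m)
    (Xi : DuplexH m →ₐ[Kq] (Module.End Kq (TP r m))ᵐᵒᵖ)
    (hXiT : ∀ i : Fin m, (Xi (Tg m i)).unop = RopN r m (i : ℕ))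
    (hXix : ∀ (l : Fin (m+1)) (σ : Equiv.Perm (Fin (l : ℕ))),
      ∀ v ∈ Vsub r m (l : ℕ), (Xi (Xg m l σ)).unop v = opPerm r m σ v)
    (hXix0 : ∀ (l : Fin (m+1)) (σ : Equiv.Perm (Fin (l : ℕ))) (f : Fin m → Idx r),
      ¬ goodF r m (l : ℕ) f → (Xi (Xg m l σ)).unop (Mf f) = 0) :
    ∀ A : Module.End Kq (TP r m),
      (∀ h : DuplexH m, A * (Xi h).unop = (Xi h).unop * A) →
      ∀ l : ℕ, l ≤ m →
        ∃ B ∈ PhiL r m, ∀ v ∈ Vlevel r m l, A v = B v := by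
  intro A hA l _
  refine ⟨A, LeviDuality.centralizer_le_PhiL ?_, fun v _ => rfl⟩
  rw [Subalgebra.mem_centralizer_iff]
  rintro R (⟨i, hi, rfl⟩ | ⟨k, hk, rfl⟩)
  · rw [← hXiT ⟨i, hi⟩]
    exact (hA _).symm
  · rw [← LeviDuality.eq_proj (hXix ⟨k, by omega⟩ 1) (hXix0 ⟨k, by omega⟩ 1)]
    exact (hA _).symm
end
end

section
/- Existence of idempotent projections in the Levi-type ıquantum group image (step (c) in the proof of Theorem 3.5): For each 0 ≤ l ≤ m there exists an element G ∈ Φ(L_q^ı) such that G acts as the identity on the subspace V̄_l and as zero on V̄_k for every k ≠ l, 0 ≤ k ≤ m; i.e., the projection of V̄^⊗m onto V̄_l along ⊕_{k≠l} V̄_k belongs to Φ(L_q^ı). -/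
/-!
The projections already lie in the Cartan part of `Φ(L_q^ı)`, generated by the `𝕜_i`, which acts
diagonally on the basis `M_f`. Let `N_p` be the number of tensor positions of `M_f` carrying
`η_{p+1/2}` or `η_{-(p+1/2)}`, for `0 ≤ p ≤ r+1`. For `1 ≤ i ≤ r+1` the operator `𝕜_i` scales `M_f`
by `q^{N_{i-1} - N_i}`, so `∏_i 𝕜_i^i` scales it by `q` to the power
`N_0 + ⋯ + N_r - (r+1) N_{r+1}` (`prod_cartanWt`). On `V̄_l` one has `N_0 + ⋯ + N_r = l` and
`N_{r+1} = m - l`, so `V̄_l` is an eigenspace with eigenvalue `q^{l-(r+1)(m-l)}`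
(`levelFun_mem`). As `q` is transcendental these eigenvalues are pairwise distinct
(`levelEig_injOn`), and Lagrange interpolation in `∏_i 𝕜_i^i` yields the projections
(`levelIndicator_mem`).

Diagonal operators are encoded as multiplication operators on the algebra of functions
`(Fin m → Idx r) → Kq`, so that all computations take place in a commutative algebra.
-/

noncomputable section

open scoped BigOperators

set_option maxHeartbeats 1000000
set_option synthInstance.maxHeartbeats 400000

/-! ### Diagonal operators -/

/-- A tensor power of a diagonal operator is multiplication by the product of its eigenvalues. -/
lemma tensorOp_diag (r m : ℕ) (c : Idx r → Kq) :
    tensorOp r m (fun _ => diagMove r c id) =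
      Algebra.lmul Kq (TP r m) (fun f => ∏ k, c (f k)) := by
  refine LinearMap.ext fun v => funext fun g => ?_
  change ∑ f : Fin m → Idx r, (∏ k, c (g k) * (Pi.single (f k) (1 : Kq) : Vb r) (g k)) * v f =
    (∏ k, c (g k)) * v g
  rw [Finset.sum_eq_single g]
  · simp
  · intro f _ hf
    obtain ⟨k, hk⟩ := Function.ne_iff.mp hf
    rw [Finset.prod_eq_zero (Finset.mem_univ k), zero_mul]
    rw [Pi.single_eq_of_ne (Ne.symm hk), mul_zero]
  · simp

/-- The functions `w` on the index set of the basis `M_f` for which the diagonal operator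
`M_f ↦ w f • M_f` lies in `Φ(L_q^ı)`. -/
def diagLevi (r m : ℕ) : Subalgebra Kq (TP r m) :=
  (PhiL r m).comap (Algebra.lmul Kq (TP r m))

lemma lmul_Mf {r m : ℕ} (w : TP r m) (f : Fin m → Idx r) :
    Algebra.lmul Kq (TP r m) w (Mf f) = w f • Mf f := by
  funext g
  change w g * (Pi.single f (1 : Kq) : TP r m) g = w f * (Pi.single f (1 : Kq) : TP r m) g
  by_cases h : g = f
  · rw [h]
  · simp [Pi.single_eq_of_ne h]

/-! ### The weights of the Cartan part -/

/-- The distance of an index from the centre: the basis vector `η_{±(p+1/2)}` has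
`centreDist` equal to `p`. -/
def centreDist {r : ℕ} (j : Idx r) : ℕ := if r + 2 ≤ (j : ℕ) then j - (r + 2) else r + 1 - j

lemma innerI_iff_centreDist {r : ℕ} (j : Idx r) : innerI r j ↔ centreDist j < r + 1 := by
  have := j.2
  simp only [innerI, botI, topI, centreDist, ne_eq, Fin.ext_iff]
  split_ifs <;> omega

lemma centreDist_le {r : ℕ} (j : Idx r) : centreDist j ≤ r + 1 := by
  have := j.2
  simp only [centreDist]
  split_ifs <;> omega

/-- The eigenvalue of `κ_i κ_{-i}⁻¹`, `i = s + 1`, on a basis vector of `V̄` at distance `p` from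
the centre. -/
def cartanWt (s p : ℕ) : Kq := (if s = p then qv else 1) * (if s + 1 = p then qv⁻¹ else 1)

lemma cartanWt_mem (r m s : ℕ) (hs : s < r + 1) :
    (fun f => ∏ k, cartanWt s (centreDist (f k)) : TP r m) ∈ diagLevi r m := by
  change Algebra.lmul Kq (TP r m) _ ∈ PhiL r m
  have h : opkk r m ⟨r + 2 + s, by omega⟩ ∈ PhiL r m :=
    Algebra.subset_adjoin (Or.inl (Or.inr ⟨_, rfl⟩))
  convert h using 1
  rw [opkk, opKK, opKKinv, opK, opKinv, tensorOp_diag, tensorOp_diag, ← map_mul]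
  congr 1
  funext f
  simp only [Pi.mul_apply, ← Finset.prod_mul_distrib]
  refine Finset.prod_congr rfl fun k _ => ?_
  have hj := (f k).2
  generalize f k = j at hj
  simp only [cartanWt, centreDist, loI, hiI, Fin.ext_iff, Fin.val_rev]
  split_ifs <;> first | omega | simp

lemma qv_ne_zero : qv ≠ 0 := RatFunc.X_ne_zero

lemma qv_pow_injective : Function.Injective (fun n : ℕ => qv ^ n) := by
  intro a b h
  have h' : algebraMap (Polynomial ℚ) Kq (Polynomial.X ^ a) =
      algebraMap (Polynomial ℚ) Kq (Polynomial.X ^ b) := by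
    simpa [qv, RatFunc.algebraMap_X] using h
  have h2 := RatFunc.algebraMap_injective ℚ h'
  simpa using congrArg Polynomial.natDegree h2

/-- The exponents telescope: `∏_i (κ_i κ_{-i}⁻¹)^i` scales every inner basis vector by `q`, and
`η_{±(r+3/2)}` by `q^{-(r+1)}`. -/
lemma prod_cartanWt (r p : ℕ) (hp : p ≤ r + 1) :
    ∏ s ∈ Finset.range (r + 1), cartanWt s p ^ (s + 1) =
      if p < r + 1 then qv else (qv ^ (r + 1))⁻¹ := by
  have h0 := qv_ne_zero
  have h1 : ∏ s ∈ Finset.range (r + 1), (if s = p then qv else 1) ^ (s + 1) =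
      if p < r + 1 then qv ^ (p + 1) else 1 := by
    simp [ite_pow, Finset.prod_ite_eq']
  have h2 : ∏ s ∈ Finset.range (r + 1), (if s + 1 = p then qv⁻¹ else 1) ^ (s + 1) =
      (qv ^ p)⁻¹ := by
    cases p with
    | zero => simp
    | succ n =>
      have hn : n < r + 1 := by omega
      simp [ite_pow, Finset.prod_ite_eq', hn]
  simp only [cartanWt, mul_pow, Finset.prod_mul_distrib]
  rw [h1, h2]
  split_ifs with h
  · rw [pow_succ]
    field_simp
  · rw [show p = r + 1 by omega, one_mul]

/-! ### Separation of the levels -/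

/-- The eigenvalue of `∏_i 𝕜_i^i` (over `1 ≤ i ≤ r + 1`) on `V̄_l`. -/
def levelEig (r m l : ℕ) : Kq := qv ^ l * ((qv ^ (r + 1))⁻¹) ^ (m - l)

lemma levelEig_injOn {r m l k : ℕ} (hl : l ≤ m) (hk : k ≤ m)
    (h : levelEig r m l = levelEig r m k) : l = k := by
  -- Clearing the denominator `q^{(r+1)m}` turns the eigenvalue into a power of `q`.
  have key : ∀ n ≤ m, levelEig r m n * (qv ^ (r + 1)) ^ m = qv ^ ((r + 2) * n) := by
    intro n hn
    obtain ⟨d, rfl⟩ := Nat.exists_eq_add_of_le hn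
    have hq : (qv ^ (r + 1)) ^ d ≠ 0 := pow_ne_zero _ (pow_ne_zero _ qv_ne_zero)
    rw [levelEig, Nat.add_sub_cancel_left, pow_add (qv ^ (r + 1)) n d, inv_pow,
      mul_comm ((qv ^ (r + 1)) ^ n), mul_assoc, inv_mul_cancel_left₀ hq, ← pow_mul, ← pow_add]
    congr 1
    ring
  have h2 : qv ^ ((r + 2) * l) = qv ^ ((r + 2) * k) := by rw [← key l hl, ← key k hk, h]
  exact Nat.eq_of_mul_eq_mul_left (by omega) (qv_pow_injective h2)

/-- The eigenvalue of `∏_i 𝕜_i^i` on `M_f` depends only on the number of inner indices of `f`. -/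
lemma levelFun_mem (r m : ℕ) :
    ∃ T ∈ diagLevi r m, ∀ f : Fin m → Idx r,
      T f = levelEig r m (Nat.card {k : Fin m // innerI r (f k)}) := by
  classical
  have hmem : ∏ s ∈ Finset.range (r + 1),
      (fun f => ∏ k, cartanWt s (centreDist (f k)) : TP r m) ^ (s + 1) ∈ diagLevi r m :=
    prod_mem fun s hs => pow_mem (cartanWt_mem r m s (Finset.mem_range.mp hs)) _
  refine ⟨_, hmem, fun f => ?_⟩
  have hcard : (Finset.univ.filter fun k : Fin m => ¬ innerI r (f k)).card =
      m - (Finset.univ.filter fun k : Fin m => innerI r (f k)).card := by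
    have := Finset.card_filter_add_card_filter_not (s := (Finset.univ : Finset (Fin m)))
      (fun k => innerI r (f k))
    rw [Finset.card_univ, Fintype.card_fin] at this
    omega
  simp only [Finset.prod_apply, Pi.pow_apply, ← Finset.prod_pow]
  rw [Finset.prod_comm]
  simp only [prod_cartanWt _ _ (centreDist_le _), ← innerI_iff_centreDist]
  rw [Finset.prod_ite, Finset.prod_const, Finset.prod_const, hcard, levelEig,
    Nat.card_eq_fintype_card, Fintype.card_subtype]

/-- Lagrange interpolation at the eigenvalues `levelEig`: the indicator function of a level. -/
lemma levelIndicator_mem (r m l : ℕ) (hl : l ≤ m) :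
    ∃ P ∈ diagLevi r m, ∀ f : Fin m → Idx r, ∀ k ≤ m,
      Nat.card {k : Fin m // innerI r (f k)} = k → P f = if k = l then 1 else 0 := by
  obtain ⟨T, hT, hTf⟩ := levelFun_mem r m
  refine ⟨∏ j ∈ (Finset.range (m + 1)).erase l,
    (levelEig r m l - levelEig r m j)⁻¹ • (T - algebraMap Kq _ (levelEig r m j)),
    Subalgebra.prod_mem _ fun j _ => Subalgebra.smul_mem _
      (Subalgebra.sub_mem _ hT (Subalgebra.algebraMap_mem _ _)) _, fun f k hk hf => ?_⟩
  simp only [Finset.prod_apply, Pi.smul_apply, Pi.sub_apply, Pi.algebraMap_apply,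
    Algebra.algebraMap_self, RingHom.id_apply, smul_eq_mul, hTf, hf]
  split_ifs with h
  · subst h
    refine Finset.prod_eq_one fun j hj => inv_mul_cancel₀ (sub_ne_zero.mpr fun he => ?_)
    rw [Finset.mem_erase, Finset.mem_range] at hj
    exact hj.1 (levelEig_injOn hl (by omega) he).symm
  · refine Finset.prod_eq_zero (i := k) ?_ (by rw [sub_self, mul_zero])
    rw [Finset.mem_erase, Finset.mem_range]
    omega

/-- **Step (c) in the proof of Theorem 3.5.** For each `0 ≤ l ≤ m` there exists
`G ∈ Φ(L_q^ı)` acting as the identity on `V̄_l` and as zero on every `V̄_k`, `k ≠ l`: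
the projection onto `V̄_l` along `⊕_{k ≠ l} V̄_k` belongs to `Φ(L_q^ı)`. -/
theorem levi_contains_level_projections (r m : ℕ) (hr : 1 ≤ r) (hm : 2 ≤ m) :
    ∀ l : ℕ, l ≤ m →
      ∃ G ∈ PhiL r m,
        (∀ v ∈ Vlevel r m l, G v = v) ∧
        (∀ k : ℕ, k ≤ m → k ≠ l → ∀ v ∈ Vlevel r m k, G v = 0) := by
  intro l hl
  obtain ⟨P, hP, hPf⟩ := levelIndicator_mem r m l hl
  have key : ∀ k ≤ m, ∀ v ∈ Vlevel r m k,
      Algebra.lmul Kq (TP r m) P v = (if k = l then (1 : Kq) else 0) • v := by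
    intro k hk v hv
    induction hv using Submodule.span_induction with
    | mem v hv =>
      obtain ⟨f, hf, rfl⟩ := hv
      rw [lmul_Mf, hPf f k hk hf]
    | zero => rw [map_zero, smul_zero]
    | add u w _ _ hu hw => rw [map_add, hu, hw, smul_add]
    | smul c u _ hu => rw [map_smul, hu, smul_comm]
  refine ⟨Algebra.lmul Kq (TP r m) P, hP, fun v hv => ?_, fun k hk hkl v hv => ?_⟩
  · rw [key l hl v hv, if_pos rfl, one_smul]
  · rw [key k hk v hv, if_neg hkl, zero_smul]
end
end

section
/- Well-definedness of the type-B Hecke action on the tensor space (the claim of §1.3.2): the operators R_0, R_1, …, R_{m−1} on V̄^⊗m defined by the displayed formulas satisfy the defining relations of H(B_m), namely (R_i − q⁻¹)(R_i + q) = 0 for 0 ≤ i ≤ m−1, R_i R_{i+1} R_i = R_{i+1} R_i R_{i+1} for 1 ≤ i ≤ m−2, R_i R_j = R_j R_i for |i−j| > 1, and R_0 R_1 R_0 R_1 = R_1 R_0 R_1 R_0. Consequently there exists a unique K-algebra anti-homomorphism Ψ : H(B_m) → End_K(V̄^⊗m) with Ψ(H_i) = R_i for all i, making V̄^⊗m a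 right H(B_m)-module. -/
/-!
Each `R_i` with `i ≥ 1` touches only two adjacent tensor slots, and `R_0` only the first one, so
each defining relation of `H(B_m)` involves at most four slots. Freezing the remaining entries of
a multi-index (`put4`), the operators become explicit piecewise formulas in the values of those
slots (`Rsw_slots`, `R0op_slot`), whose branches depend only on the relative order of the values
and their negatives `Fin.rev`. The quadratic and braid relations follow by going through the
possible orderings, each case being a polynomial identity in `q, q⁻¹`; commutation of distant
generators holds because they act on disjoint slots. In `R0op_braid` the values `0 < a ≤ b` up to
sign and exchange leave one generic case, `a < b`, and one degenerate case, `a = b`.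

The defining relations are stable under reversing words, so the `R_i` also satisfy them in the
opposite endomorphism algebra (`freePsi_rel`). The universal properties of the free algebra and of
its quotient then give `Ψ` and its uniqueness.
-/

noncomputable section

open scoped BigOperators

set_option maxHeartbeats 1000000
set_option synthInstance.maxHeartbeats 400000

/-- The action of a braid generator on two adjacent slots: `G a b` is a family of multi-indices
with entries `a`, `b` at positions `p`, `p + 1`, whose other entries are unchanged when `a`
and `b` are exchanged. -/
lemma Rsw_slots {r m p : ℕ} (h : p + 1 < m) (v : TP r m) (G : Idx r → Idx r → Fin m → Idx r)
    (hp : ∀ a b, G a b ⟨p, by omega⟩ = a) (hp' : ∀ a b, G a b ⟨p + 1, h⟩ = b)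
    (ho : ∀ a b (k : Fin m), (k : ℕ) ≠ p → (k : ℕ) ≠ p + 1 → G a b k = G b a k)
    (a b : Idx r) :
    Rsw r m p v (G a b) = if a = b then qv⁻¹ * v (G a b) else
      v (G b a) + if b < a then (qv⁻¹ - qv) * v (G a b) else 0 := by
  have hs : G a b ∘ Equiv.swap ⟨p, by omega⟩ ⟨p + 1, h⟩ = G b a := by
    funext k
    by_cases h1 : k = ⟨p, by omega⟩
    · subst h1; simp [hp, hp']
    by_cases h2 : k = ⟨p + 1, h⟩
    · subst h2; simp [hp, hp']
    simp only [Function.comp_apply, Equiv.swap_apply_of_ne_of_ne h1 h2]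
    exact ho a b k (fun e => h1 (Fin.ext e)) (fun e => h2 (Fin.ext e))
  simp only [Rsw, h, dif_pos, LinearMap.coe_mk, AddHom.coe_mk, hs, hp, hp']

/-- The action of `R_0` on the first slot: `G a` is a family of multi-indices with entry `a`
at position `0` and all other entries independent of `a`. -/
lemma R0op_slot {r m : ℕ} (h : 0 < m) (v : TP r m) (G : Idx r → Fin m → Idx r)
    (hp : ∀ a, G a ⟨0, h⟩ = a)
    (ho : ∀ a b (k : Fin m), (k : ℕ) ≠ 0 → G a k = G b k) (a : Idx r) :
    R0op r m v (G a) = v (G a.rev) + if a < a.rev then (qv⁻¹ - qv) * v (G a) else 0 := by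
  have hs : Function.update (G a) ⟨0, h⟩ a.rev = G a.rev := by
    funext k
    by_cases h1 : k = ⟨0, h⟩
    · subst h1; simp [hp]
    rw [Function.update_of_ne h1]
    exact ho _ _ k (fun e => h1 (Fin.ext e))
  simp only [R0op, h, dif_pos, LinearMap.coe_mk, AddHom.coe_mk, hs, hp]

/-- `g` with its entries at positions `p₁, p₂, p₃, p₄` replaced by `a, b, c, d`;
an earlier position wins over a later one that coincides with it. -/
def put4 {r m : ℕ} (g : Fin m → Idx r) (p₁ p₂ p₃ p₄ : ℕ) (a b c d : Idx r) : Fin m → Idx r :=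
  fun k => if (k : ℕ) = p₁ then a else if (k : ℕ) = p₂ then b else
    if (k : ℕ) = p₃ then c else if (k : ℕ) = p₄ then d else g k

/-- Every multi-index lies in the family `put4 g`, so an identity of coordinates can be checked on
that family. -/
lemma put4_self {r m : ℕ} (g : Fin m → Idx r) (p₁ p₂ p₃ p₄ : Fin m) :
    put4 g p₁ p₂ p₃ p₄ (g p₁) (g p₂) (g p₃) (g p₄) = g := by
  funext k
  simp only [put4, Fin.val_inj]
  split_ifs <;> simp_all

/-! ### The relations between the operators -/

lemma R0op_quad (r m : ℕ) (hm : 0 < m) :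
    (R0op r m - qv⁻¹ • 1) * (R0op r m + qv • 1) = 0 := by
  have hq := qv_ne_zero
  refine LinearMap.ext fun v => funext fun g => ?_
  have key := fun (w : TP r m) (a : Idx r) =>
    R0op_slot hm w (fun a => put4 g 0 0 0 0 a a a a) (by simp [put4]) (by simp +contextual [put4]) a
  have hg := put4_self g ⟨0, hm⟩ ⟨0, hm⟩ ⟨0, hm⟩ ⟨0, hm⟩
  simp only at key hg
  rw [← hg]
  generalize g ⟨0, hm⟩ = a
  -- The number of indices is even, so `Fin.rev` has no fixed point: `η_j` and `η_{-j}` differ.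
  have hne : a < a.rev ∨ a.rev < a := by
    have := a.2
    simp only [Fin.lt_def, Fin.val_rev]; omega
  simp only [Module.End.mul_apply, LinearMap.sub_apply, LinearMap.add_apply, LinearMap.smul_apply,
    Module.End.one_apply, Pi.sub_apply, Pi.add_apply, Pi.smul_apply, smul_eq_mul, key, Fin.rev_rev,
    map_add, map_smul, LinearMap.zero_apply, Pi.zero_apply]
  rcases hne with h | h <;> simp only [h, h.not_gt, if_true, if_false] <;> field_simp <;> ring

lemma Rsw_quad (r m p : ℕ) (hp : p + 1 < m) :
    (Rsw r m p - qv⁻¹ • 1) * (Rsw r m p + qv • 1) = 0 := by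
  have hq := qv_ne_zero
  refine LinearMap.ext fun v => funext fun g => ?_
  have key := fun (w : TP r m) (a b : Idx r) =>
    Rsw_slots hp w (fun a b => put4 g p (p+1) p p a b a a) (by simp [put4]) (by simp [put4])
      (by simp +contextual [put4]) a b
  have hg := put4_self g ⟨p, by omega⟩ ⟨p+1, hp⟩ ⟨p, by omega⟩ ⟨p, by omega⟩
  simp only at key hg
  rw [← hg]
  generalize g ⟨p, by omega⟩ = a
  generalize g ⟨p+1, hp⟩ = b
  simp only [Module.End.mul_apply, LinearMap.sub_apply, LinearMap.add_apply, LinearMap.smul_apply,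
    Module.End.one_apply, Pi.sub_apply, Pi.add_apply, Pi.smul_apply, smul_eq_mul, key,
    map_add, map_smul, LinearMap.zero_apply, Pi.zero_apply]
  rcases lt_trichotomy a b with h | h | h
  · simp only [h, h.ne, h.ne', h.not_gt, if_true, if_false]; field_simp; ring
  · subst h; simp only [if_true]; ring
  · simp only [h, h.ne, h.ne', h.not_gt, if_true, if_false]; field_simp; ring

lemma Rsw_comm (r m p s : ℕ) (hps : p + 1 < s) (hs : s + 1 < m) :
    Rsw r m p * Rsw r m s = Rsw r m s * Rsw r m p := by
  refine LinearMap.ext fun v => funext fun g => ?_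
  have key1 := fun (w : TP r m) (a b c d : Idx r) =>
    Rsw_slots (p := p) (by omega) w (fun a b => put4 g p (p+1) s (s+1) a b c d)
      (by simp [put4]) (by simp [put4]) (by simp +contextual [put4]) a b
  have key2 := fun (w : TP r m) (a b c d : Idx r) =>
    Rsw_slots hs w (fun c d => put4 g p (p+1) s (s+1) a b c d)
      (by intros; simp only [put4]; rw [if_neg (by omega), if_neg (by omega)]; simp)
      (by intros; simp only [put4]; rw [if_neg (by omega), if_neg (by omega)]; simp)
      (by simp +contextual [put4]) c d
  have hg := put4_self g ⟨p, by omega⟩ ⟨p+1, by omega⟩ ⟨s, by omega⟩ ⟨s+1, hs⟩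
  simp only at key1 key2 hg
  rw [← hg]
  generalize g ⟨p, by omega⟩ = a
  generalize g ⟨p+1, by omega⟩ = b
  generalize g ⟨s, by omega⟩ = c
  generalize g ⟨s+1, hs⟩ = d
  simp only [Module.End.mul_apply, key1, key2]
  split_ifs <;> ring

lemma R0op_comm (r m s : ℕ) (h0 : 0 < s) (hs : s + 1 < m) :
    R0op r m * Rsw r m s = Rsw r m s * R0op r m := by
  refine LinearMap.ext fun v => funext fun g => ?_
  have key1 := fun (w : TP r m) (a b c : Idx r) =>
    R0op_slot (by omega) w (fun a => put4 g 0 s (s+1) (s+1) a b c c)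
      (by simp [put4]) (by simp +contextual [put4]) a
  have key2 := fun (w : TP r m) (a b c : Idx r) =>
    Rsw_slots hs w (fun b c => put4 g 0 s (s+1) (s+1) a b c c)
      (by intros; simp only [put4]; rw [if_neg (by omega)]; simp)
      (by intros; simp only [put4]; rw [if_neg (by omega), if_neg (by omega)]; simp)
      (by simp +contextual [put4]) b c
  have hg := put4_self g ⟨0, by omega⟩ ⟨s, by omega⟩ ⟨s+1, by omega⟩ ⟨s+1, hs⟩
  simp only at key1 key2 hg
  rw [← hg]
  generalize g ⟨0, by omega⟩ = a
  generalize g ⟨s, by omega⟩ = b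
  generalize g ⟨s+1, hs⟩ = c
  simp only [Module.End.mul_apply, key1, key2]
  split_ifs <;> ring

lemma Rsw_braid (r m p : ℕ) (hp : p + 2 < m) :
    Rsw r m p * Rsw r m (p+1) * Rsw r m p = Rsw r m (p+1) * Rsw r m p * Rsw r m (p+1) := by
  have hq := qv_ne_zero
  refine LinearMap.ext fun v => funext fun g => ?_
  have key1 := fun (w : TP r m) (a b c : Idx r) =>
    Rsw_slots (p := p) (by omega) w (fun a b => put4 g p (p+1) (p+2) (p+2) a b c c)
      (by simp [put4]) (by simp [put4]) (by simp +contextual [put4]) a b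
  have key2 := fun (w : TP r m) (a b c : Idx r) =>
    Rsw_slots (p := p + 1) hp w (fun b c => put4 g p (p+1) (p+2) (p+2) a b c c)
      (by simp [put4]) (by simp [put4]; omega) (by simp +contextual [put4]) b c
  have hg := put4_self g ⟨p, by omega⟩ ⟨p+1, by omega⟩ ⟨p+2, hp⟩ ⟨p+2, hp⟩
  simp only at key1 key2 hg
  rw [← hg]
  generalize g ⟨p, by omega⟩ = a
  generalize g ⟨p+1, by omega⟩ = b
  generalize g ⟨p+2, hp⟩ = c
  simp only [Module.End.mul_apply, key1, key2]
  -- The relation only depends on the relative order of the three entries.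
  rcases lt_trichotomy a b with h1 | h1 | h1 <;> rcases lt_trichotomy b c with h2 | h2 | h2 <;>
    rcases lt_trichotomy a c with h3 | h3 | h3 <;> first
    | (exfalso; order)
    | (try subst h1
       try subst h2
       try subst h3
       simp only [*, lt_irrefl, ne_of_lt, ne_of_gt, not_lt_of_gt, if_true, if_false]
       try field_simp
       try ring)

/-- The type `B₂` braid relation on the first two slots. Writing `-x` for `x.rev`, every pair of
entries is `(±a, ±b)` or `(±b, ±a)` with `0 < a ≤ b`, and the order of `-b, -a, a, b` is then
determined by whether `a < b` or `a = b`. -/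
lemma R0op_braid (r m : ℕ) (hm : 1 < m) :
    R0op r m * Rsw r m 0 * R0op r m * Rsw r m 0 =
      Rsw r m 0 * R0op r m * Rsw r m 0 * R0op r m := by
  have hq := qv_ne_zero
  refine LinearMap.ext fun v => funext fun g => ?_
  have key1 := fun (w : TP r m) (a b : Idx r) =>
    R0op_slot (by omega) w (fun a => put4 g 0 1 1 1 a b b b)
      (by simp [put4]) (by simp +contextual [put4]) a
  have key2 := fun (w : TP r m) (a b : Idx r) =>
    Rsw_slots (p := 0) hm w (fun a b => put4 g 0 1 1 1 a b b b)
      (by simp [put4]) (by simp [put4]) (by simp +contextual [put4]) a b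
  have hg := put4_self g ⟨0, by omega⟩ ⟨1, hm⟩ ⟨1, hm⟩ ⟨1, hm⟩
  simp only at key1 key2 hg
  rw [← hg]
  generalize g ⟨0, by omega⟩ = a
  generalize g ⟨1, hm⟩ = b
  simp only [Module.End.mul_apply]
  -- Every index is `±y` with `y` in the positive half.
  have sgn : ∀ x : Idx r, ∃ y : Idx r, y.rev < y ∧ (x = y ∨ x = y.rev) := by
    intro x
    rcases lt_or_ge x.rev x with h | h
    · exact ⟨x, h, Or.inl rfl⟩
    · refine ⟨x.rev, ?_, Or.inr (by simp)⟩
      have := x.2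
      simp only [Fin.le_def, Fin.lt_def, Fin.val_rev] at h ⊢
      omega
  -- Pairs whose entries have distinct absolute values `a < b`.
  have main : ∀ a b : Idx r, a.rev < a → a < b → ∀ x y : Idx r,
      ((x = a ∨ x = a.rev) ∧ (y = b ∨ y = b.rev)) ∨
        ((x = b ∨ x = b.rev) ∧ (y = a ∨ y = a.rev)) →
      R0op r m (Rsw r m 0 (R0op r m (Rsw r m 0 v))) (put4 g 0 1 1 1 x y y y) =
        Rsw r m 0 (R0op r m (Rsw r m 0 (R0op r m v))) (put4 g 0 1 1 1 x y y y) := by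
    intro a b ha hab x y hxy
    have h1 : b.rev < a.rev := Fin.rev_lt_rev.2 hab
    have h2 : a.rev < b := ha.trans hab
    have h3 : b.rev < a := h1.trans ha
    have h4 : b.rev < b := h1.trans h2
    rcases hxy with ⟨rfl | rfl, rfl | rfl⟩ | ⟨rfl | rfl, rfl | rfl⟩ <;>
    · simp only [key1, key2, Fin.rev_rev, ha, hab, h1, h2, h3, h4, hab.ne, h1.ne, h2.ne, h3.ne,
        hab.ne', h1.ne', h2.ne', h3.ne', ha.not_gt, hab.not_gt,
        h1.not_gt, h2.not_gt, h3.not_gt, h4.not_gt, if_true, if_false]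
      try ring
  obtain ⟨a', ha, hxa⟩ := sgn a
  obtain ⟨b', hb, hyb⟩ := sgn b
  rcases lt_trichotomy a' b' with h | h | h
  · exact main a' b' ha h a b (Or.inl ⟨hxa, hyb⟩)
  · subst h
    rcases hxa with rfl | rfl <;> rcases hyb with rfl | rfl <;>
    · simp only [key1, key2, Fin.rev_rev, ha, ha.ne, ha.ne', ha.not_gt, if_true, if_false]
      field_simp
      try ring
  · exact main b' a' hb h a b (Or.inr ⟨hxa, hyb⟩)

/-! ### The relations in the uniform indexing, and passage to the Hecke algebra -/

lemma RopN_quad (r m i : ℕ) (hi : i < m) :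
    (RopN r m i - qv⁻¹ • 1) * (RopN r m i + qv • 1) = 0 := by
  rcases i with _ | i
  · exact R0op_quad r m hi
  · exact Rsw_quad r m i hi

lemma RopN_comm_of_lt (r m i j : ℕ) (hj : j < m) (h : i + 1 < j) :
    RopN r m i * RopN r m j = RopN r m j * RopN r m i := by
  obtain ⟨j, rfl⟩ : ∃ k, j = k + 1 := ⟨j - 1, by omega⟩
  rcases i with _ | i
  · exact R0op_comm r m j (by omega) hj
  · exact Rsw_comm r m i j (by omega) hj

lemma RopN_comm (r m i j : ℕ) (hi : i < m) (hj : j < m) (h : i + 1 < j ∨ j + 1 < i) :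
    RopN r m i * RopN r m j = RopN r m j * RopN r m i :=
  h.elim (RopN_comm_of_lt r m i j hj) fun h => (RopN_comm_of_lt r m j i hi h).symm

lemma RopN_braid (r m i : ℕ) (h1 : 1 ≤ i) (h2 : i + 1 < m) :
    RopN r m i * RopN r m (i+1) * RopN r m i =
      RopN r m (i+1) * RopN r m i * RopN r m (i+1) := by
  obtain ⟨i, rfl⟩ : ∃ k, i = k + 1 := ⟨i - 1, by omega⟩
  exact Rsw_braid r m i h2

/-- The homomorphism from the free algebra to the opposite endomorphism algebra sending the
`i`-th generator to `R_i`. -/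
def freePsi (r m : ℕ) : FreeAlgebra Kq (Fin m) →ₐ[Kq] (Module.End Kq (TP r m))ᵐᵒᵖ :=
  FreeAlgebra.lift Kq fun i => MulOpposite.op (RopN r m i)

lemma freePsi_Hvar (r m : ℕ) (i : Fin m) :
    freePsi r m (Hvar m i) = MulOpposite.op (RopN r m i) :=
  FreeAlgebra.lift_ι_apply _ _

/-- Passing to the opposite algebra reverses words; each defining relation of `H(B_m)` is
preserved under reversal. -/
lemma freePsi_rel (r m : ℕ) ⦃x y : FreeAlgebra Kq (Fin m)⦄ (h : HBrel m x y) :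
    freePsi r m x = freePsi r m y := by
  apply MulOpposite.unop_injective
  cases h with
  | quad i =>
    have h := RopN_quad r m i i.2
    simp only [map_mul, map_sub, map_add, map_zero, freePsi_Hvar, AlgHom.commutes,
      MulOpposite.unop_mul, MulOpposite.unop_sub, MulOpposite.unop_add, MulOpposite.unop_op,
      MulOpposite.unop_zero, MulOpposite.algebraMap_apply]
    rw [← h]
    simp only [Algebra.algebraMap_eq_smul_one, mul_add, add_mul, mul_sub, sub_mul,
      smul_mul_assoc, mul_smul_comm, one_mul, mul_one, smul_add, smul_sub, smul_smul, mul_comm qv qv⁻¹]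
    abel
  | braid i h1 h2 =>
    simpa [freePsi_Hvar, mul_assoc] using RopN_braid r m i h1 h2
  | comm i j h =>
    simpa [freePsi_Hvar] using (RopN_comm r m i j i.2 j.2 h).symm
  | braid0 h =>
    simpa [freePsi_Hvar, mul_assoc, RopN] using (R0op_braid r m h).symm

/-- **Well-definedness of the type-`B` Hecke action on the tensor space (§1.3.2).**
The operators `R_0, …, R_{m-1}` on `V̄^⊗m` satisfy the defining relations of `H(B_m)`;
consequently there is a unique `K`-algebra anti-homomorphism `Ψ : H(B_m) → End_K(V̄^⊗m)`
(realized as an algebra homomorphism into the opposite algebra) with `Ψ(H_i) = R_i` for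
all `i`, making `V̄^⊗m` a right `H(B_m)`-module. -/
theorem hecke_action_well_defined (r m : ℕ) (hr : 1 ≤ r) (hm : 2 ≤ m) :
    (∀ i : ℕ, i < m →
      (RopN r m i - qv⁻¹ • 1) * (RopN r m i + qv • 1) = 0) ∧
    (∀ i : ℕ, 1 ≤ i → i + 1 < m →
      RopN r m i * RopN r m (i+1) * RopN r m i
        = RopN r m (i+1) * RopN r m i * RopN r m (i+1)) ∧
    (∀ i j : ℕ, i < m → j < m → (i + 1 < j ∨ j + 1 < i) →
      RopN r m i * RopN r m j = RopN r m j * RopN r m i) ∧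
    (RopN r m 0 * RopN r m 1 * RopN r m 0 * RopN r m 1
      = RopN r m 1 * RopN r m 0 * RopN r m 1 * RopN r m 0) ∧
    (∃! Psi : HeckeB m →ₐ[Kq] (Module.End Kq (TP r m))ᵐᵒᵖ,
      ∀ i : Fin m, (Psi (Hgen m i)).unop = RopN r m (i : ℕ)) := by
  refine ⟨RopN_quad r m, RopN_braid r m, RopN_comm r m, R0op_braid r m (by omega), ?_⟩
  refine ⟨RingQuot.liftAlgHom Kq ⟨freePsi r m, freePsi_rel r m⟩, fun i => ?_, fun Phi hPhi => ?_⟩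
  · simp only [Hgen, RingQuot.liftAlgHom_mkAlgHom_apply, freePsi_Hvar, MulOpposite.unop_op]
  · refine RingQuot.ringQuot_ext' _ _ _ (FreeAlgebra.hom_ext (funext fun i => ?_))
    apply MulOpposite.unop_injective
    have h := hPhi i
    simp only [Hgen, Hvar] at h
    simp [h, freePsi]
end
end
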